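/- Let K be a field and let Q be a continuous factor which is also a K-algebra, with unique rank function N_Q. Assume there exists a K-subalgebra Q_0 of Q of countable K-dimension which is dense in Q for the N_Q-metric. Then the following are equivalent: (i) Q is isomorphic to M_K as a K-algebra; (ii) Q is isomorphic as a K-algebra to the completion of some ultramatricial K-algebra B with respect to the metric induced by some extremal pseudo-rank function on B; (iii) for every eps > 0 and all x_1, ..., x_n in Q there exist a matricial K-subalgebra A of Q and elements y_1, ..., y_n in A with N_Q(x_i - y_i) < eps for all i. -/

import Mathlib

open scoped TensorProduct Kronecker

noncomputable section

namespace AraClaramunt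

/-! ### Pseudo-rank functions and rank metric notions -/

/-- A pseudo-rank function on a unital ring. -/
structure IsPseudoRankFunction {R : Type*} [Ring R] (N : R → ℝ) : Prop where
  nonneg : ∀ x : R, 0 ≤ N x
  le_one : ∀ x : R, N x ≤ 1
  map_one : N 1 = 1
  subadditive : ∀ a b : R, N (a + b) ≤ N a + N b
  mul_le_left : ∀ a b : R, N (a * b) ≤ N a
  mul_le_right : ∀ a b : R, N (a * b) ≤ N b
  add_of_orthogonal : ∀ e f : R, IsIdempotentElem e → IsIdempotentElem f →
    e * f = 0 → f * e = 0 → N (e + f) = N e + N f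

/-- A rank function is a faithful pseudo-rank function. -/
def IsRankFunction {R : Type*} [Ring R] (N : R → ℝ) : Prop :=
  IsPseudoRankFunction N ∧ ∀ x : R, N x = 0 → x = 0

/-- Cauchy sequence for the pseudo-metric `d(x,y) = N (x - y)`. -/
def RankCauchy {R : Type*} [Ring R] (N : R → ℝ) (u : ℕ → R) : Prop :=
  ∀ ε : ℝ, 0 < ε → ∃ n₀ : ℕ, ∀ m n : ℕ, n₀ ≤ m → n₀ ≤ n → N (u m - u n) < ε

/-- Convergence for the pseudo-metric `d(x,y) = N (x - y)`. -/
def RankTendsto {R : Type*} [Ring R] (N : R → ℝ) (u : ℕ → R) (x : R) : Prop :=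
  ∀ ε : ℝ, 0 < ε → ∃ n₀ : ℕ, ∀ n : ℕ, n₀ ≤ n → N (u n - x) < ε

/-- Completeness with respect to the pseudo-metric `d(x,y) = N (x - y)`. -/
def RankComplete {R : Type*} [Ring R] (N : R → ℝ) : Prop :=
  ∀ u : ℕ → R, RankCauchy N u → ∃ x : R, RankTendsto N u x

/-- Density of a subset with respect to the pseudo-metric `d(x,y) = N (x - y)`. -/
def RankDense {R : Type*} [Ring R] (N : R → ℝ) (S : Set R) : Prop :=
  ∀ x : R, ∀ ε : ℝ, 0 < ε → ∃ y ∈ S, N (x - y) < ε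

/-- von Neumann regularity. -/
def VNRegular (R : Type*) [Ring R] : Prop :=
  ∀ x : R, ∃ y : R, x = x * y * x

/-- A continuous factor: a simple, von Neumann regular, right and left self-injective ring
admitting a rank function whose image is all of `[0,1]`. -/
def IsContinuousFactor (R : Type*) [Ring R] : Prop :=
  IsSimpleRing R ∧ VNRegular R ∧ Module.Injective R R ∧ Module.Injective Rᵐᵒᵖ Rᵐᵒᵖ ∧
    ∃ N : R → ℝ, IsRankFunction N ∧ Set.range N = Set.Icc (0 : ℝ) 1

/-- An extremal pseudo-rank function: an extreme point of the convex set of all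
pseudo-rank functions. -/
def IsExtremalPseudoRankFunction {R : Type*} [Ring R] (N : R → ℝ) : Prop :=
  N ∈ Set.extremePoints ℝ {S : R → ℝ | IsPseudoRankFunction S}

/-! ### Matricial and ultramatricial algebras -/

/-- A matricial `K`-algebra. -/
def IsMatricialAlgebra (K : Type*) [Field K] (A : Type*) [Ring A] [Algebra K A] : Prop :=
  ∃ (k : ℕ) (n : Fin (k + 1) → ℕ), (∀ i, 0 < n i) ∧
    Nonempty (A ≃ₐ[K] ((i : Fin (k + 1)) → Matrix (Fin (n i)) (Fin (n i)) K))

/-- An ultramatricial `K`-algebra: the increasing union of matricial subalgebras. -/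
def IsUltramatricialAlgebra (K : Type*) [Field K] (B : Type*) [Ring B] [Algebra K B] : Prop :=
  ∃ C : ℕ → Subalgebra K B, (∀ n, C n ≤ C (n + 1)) ∧
    (∀ n, IsMatricialAlgebra K (C n)) ∧ (∀ b : B, ∃ n, b ∈ C n)

/-- `Q`, with rank function `N`, is the rank-metric completion of a direct limit of the matrix
algebras `M_{p n}(K)`: it is complete and carries a dense increasing tower of unital subalgebras
isomorphic to `M_{p n}(K)`. -/
def IsMatrixTowerCompletion (K : Type*) [Field K] (Q : Type*) [Ring Q] [Algebra K Q]
    (N : Q → ℝ) (p : ℕ → ℕ) : Prop :=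
  IsRankFunction N ∧ RankComplete N ∧
    ∃ A : ℕ → Subalgebra K Q, (∀ n, A n ≤ A (n + 1)) ∧
      (∀ n, Nonempty ((A n) ≃ₐ[K] Matrix (Fin (p n)) (Fin (p n)) K)) ∧
      RankDense N (⋃ n, (A n : Set Q))

/-- `Q` is (a copy of) von Neumann's continuous factor `M_K`, the completion of
`lim_n M_{2^n}(K)` with respect to its unique rank function. -/
def IsMK (K : Type*) [Field K] (Q : Type*) [Ring Q] [Algebra K Q] (N : Q → ℝ) : Prop :=
  IsMatrixTowerCompletion K Q N (fun n => 2 ^ n)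

/-- The canonical block-diagonal unital embedding `M_a(K) → M_b(K)`, `z ↦ z ⊗ 1_g`,
where `b = a * g`. -/
def blockEmbedFun (K : Type*) [Semiring K] {a : ℕ} (g b : ℕ) (h : a * g = b)
    (z : Matrix (Fin a) (Fin a) K) : Matrix (Fin b) (Fin b) K :=
  Matrix.reindex (finProdFinEquiv.trans (finCongr h)) (finProdFinEquiv.trans (finCongr h))
    (z ⊗ₖ (1 : Matrix (Fin g) (Fin g) K))

end AraClaramunt
namespace AraClaramunt

/-- Witness that `Q` (with rank function `NQ`) is isomorphic, as a `K`-algebra, to the completion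
of an ultramatricial `K`-algebra `B` with respect to the metric induced by an extremal
pseudo-rank function `NB` on `B`. -/
structure UltramatricialCompletionData (K : Type) [Field K]
    (Q : Type) [Ring Q] [Algebra K Q] (NQ : Q → ℝ) : Type 1 where
  B : Type
  [ringB : Ring B]
  [algB : Algebra K B]
  NB : B → ℝ
  pseudoRank : IsPseudoRankFunction NB
  extremal : IsExtremalPseudoRankFunction NB
  ultramatricial : IsUltramatricialAlgebra K B
  φ : B →ₐ[K] Q
  rank_eq : ∀ b : B, NQ (φ b) = NB b
  dense : RankDense NQ (Set.range φ)
  complete : RankComplete NQ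

theorem ra {M : Type*} [Semigroup M] {a b c : M} (h : a * b = c) (x : M) :
    a * (b * x) = c * x := by rw [← mul_assoc, h]

theorem exists_seq_rel {α : Type*} (P : ℕ → α → Prop) (R : ℕ → α → α → Prop) (a0 : α)
    (h0 : P 0 a0) (step : ∀ n a, P n a → ∃ a', P (n + 1) a' ∧ R n a a') :
    ∃ s : ℕ → α, s 0 = a0 ∧ ∀ n, P n (s n) ∧ R n (s n) (s (n + 1)) := by
  classical
  choose! g hg using step
  let s : ℕ → α := fun n => Nat.rec a0 (fun n a => g n a) n
  have hs : ∀ n, P n (s n) := by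
    intro n
    induction n with
    | zero => exact h0
    | succ n ih => exact (hg n _ ih).1
  exact ⟨s, rfl, fun n => ⟨hs n, (hg n _ (hs n)).2⟩⟩

section Basics

variable {Q : Type*} [Ring Q] {N : Q → ℝ}

theorem pr_zero (hN : IsPseudoRankFunction N) : N 0 = 0 := by
  have h := hN.add_of_orthogonal 0 0 (by simp [IsIdempotentElem]) (by simp [IsIdempotentElem])
    (by simp) (by simp)
  simp at h
  exact h

theorem pr_neg (hN : IsPseudoRankFunction N) (x : Q) : N (-x) = N x := by
  apply le_antisymm
  · have := hN.mul_le_right (-1) x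
    simpa using this
  · have := hN.mul_le_right (-1) (-x)
    simpa using this

theorem pr_sub_comm (hN : IsPseudoRankFunction N) (x y : Q) : N (x - y) = N (y - x) := by
  rw [← pr_neg hN, neg_sub]

theorem pr_tri (hN : IsPseudoRankFunction N) (x y z : Q) :
    N (x - z) ≤ N (x - y) + N (y - z) := by
  have := hN.subadditive (x - y) (y - z)
  simpa using this

theorem pr_mul3 (hN : IsPseudoRankFunction N) (a b c : Q) : N (a * b * c) ≤ N b :=
  (hN.mul_le_left _ _).trans (hN.mul_le_right _ _)

theorem pr_sum_le (hN : IsPseudoRankFunction N) {ι : Type*} (s : Finset ι) (f : ι → Q) :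
    N (∑ i ∈ s, f i) ≤ ∑ i ∈ s, N (f i) := by
  classical
  induction s using Finset.induction_on with
  | empty => simp [pr_zero hN]
  | insert a s ha ih =>
    rw [Finset.sum_insert ha, Finset.sum_insert ha]
    exact (hN.subadditive _ _).trans (by linarith)

theorem pr_sum_orth (hN : IsPseudoRankFunction N) {ι : Type*} (s : Finset ι) (f : ι → Q)
    (hi : ∀ i, f i * f i = f i) (ho : ∀ i j, i ≠ j → f i * f j = 0) :
    N (∑ i ∈ s, f i) = ∑ i ∈ s, N (f i) ∧ IsIdempotentElem (∑ i ∈ s, f i) := by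
  classical
  induction s using Finset.induction_on with
  | empty => simp [pr_zero hN, IsIdempotentElem]
  | insert a s ha ih =>
    have h1 : f a * ∑ i ∈ s, f i = 0 := by
      rw [Finset.mul_sum]
      exact Finset.sum_eq_zero fun i hi => ho _ _ (by rintro rfl; exact ha hi)
    have h2 : (∑ i ∈ s, f i) * f a = 0 := by
      rw [Finset.sum_mul]
      exact Finset.sum_eq_zero fun i hi => ho _ _ (by rintro rfl; exact ha hi)
    rw [Finset.sum_insert ha, Finset.sum_insert ha]
    refine ⟨?_, ?_⟩
    · rw [hN.add_of_orthogonal _ _ (hi a) ih.2 h1 h2, ih.1]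
    · have := ih.2
      unfold IsIdempotentElem at *
      rw [mul_add, add_mul, add_mul, h1, h2, hi, this]; simp

/-- `p ≤ e` idempotents. -/
theorem idem_sub {e p : Q} (he : e * e = e) (hp : p * p = p) (h1 : e * p = p) (h2 : p * e = p) :
    (e - p) * (e - p) = e - p := by
  simp [mul_sub, sub_mul, he, hp, h1, h2]

theorem pr_idem_sub (hN : IsPseudoRankFunction N) {e p : Q} (he : e * e = e) (hp : p * p = p)
    (h1 : e * p = p) (h2 : p * e = p) : N (e - p) = N e - N p := by
  have := hN.add_of_orthogonal (e - p) p (idem_sub he hp h1 h2) hp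
    (by simp [sub_mul, h1, hp]) (by simp [mul_sub, h2, hp])
  simp at this
  linarith

/-- Left gluing property. -/
theorem glue (hinj : Module.Baer Q Q) (I : ℕ → Ideal Q) (hI : Monotone I) (u : ℕ → Q)
    (hu : ∀ n m, n ≤ m → ∀ x ∈ I n, x * u m = x * u n) :
    ∃ c : Q, ∀ n, ∀ x ∈ I n, x * c = x * u n := by
  classical
  have hdir : Directed (· ≤ ·) I := hI.directed_le
  have hmem : ∀ x : (⨆ n, I n : Ideal Q), ∃ n, (x : Q) ∈ I n := by
    intro x
    exact (Submodule.mem_iSup_of_directed I hdir).1 x.2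
  choose k hk using hmem
  have key : ∀ (x : (⨆ n, I n : Ideal Q)) (n : ℕ), (x : Q) ∈ I n →
      (x : Q) * u (k x) = x * u n := by
    intro x n hn
    rcases le_total n (k x) with h | h
    · exact hu _ _ h _ hn
    · exact (hu _ _ h _ (hk x)).symm
  let g : (⨆ n, I n : Ideal Q) →ₗ[Q] Q :=
    { toFun := fun x => (x : Q) * u (k x)
      map_add' := by
        intro x y
        have hx : (x : Q) ∈ I (max (k x) (k y)) := hI (le_max_left _ _) (hk x)
        have hy : (y : Q) ∈ I (max (k x) (k y)) := hI (le_max_right _ _) (hk y)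
        rw [key x _ hx, key y _ hy, key (x + y) _ (by simpa using (I _).add_mem hx hy)]
        simp [add_mul]
      map_smul' := by
        intro r x
        have : ((r • x : (⨆ n, I n : Ideal Q)) : Q) ∈ I (k x) := by
          simpa using (I (k x)).mul_mem_left r (hk x)
        rw [key (r • x) _ this]
        simp [mul_assoc] }
  obtain ⟨g', hg'⟩ := hinj _ g
  refine ⟨g' 1, fun n x hx => ?_⟩
  have hx' : x ∈ (⨆ n, I n : Ideal Q) := (le_iSup I n) hx
  have h1 := hg' x hx'
  have h2 : g' x = x * g' 1 := by
    have := g'.map_smul x 1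
    simpa using this
  rw [← h2, h1]
  exact key ⟨x, hx'⟩ n hx

/-- Interpolation along orthogonal idempotents. -/
theorem interp (hinj : Module.Baer Q Q) (p a : ℕ → Q) (hp : ∀ k, p k * p k = p k)
    (ho : ∀ j k, j ≠ k → p j * p k = 0) : ∃ c : Q, ∀ k, p k * c = p k * a k := by
  classical
  let P : ℕ → Q := fun n => ∑ k ∈ Finset.range n, p k
  let u : ℕ → Q := fun n => ∑ k ∈ Finset.range n, p k * a k
  have pP : ∀ n k, k < n → p k * P n = p k := by
    intro n k hk
    simp only [P, Finset.mul_sum]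
    rw [Finset.sum_eq_single k]
    · exact hp k
    · intro b _ hb; exact ho _ _ hb.symm
    · intro h; simp at h; omega
  have Pp : ∀ n k, k < n → P n * p k = p k := by
    intro n k hk
    simp only [P, Finset.sum_mul]
    rw [Finset.sum_eq_single k]
    · exact hp k
    · intro b _ hb; exact ho _ _ hb
    · intro h; simp at h; omega
  have Pp0 : ∀ n k, n ≤ k → P n * p k = 0 := by
    intro n k hk
    simp only [P, Finset.sum_mul]
    apply Finset.sum_eq_zero
    intro b hb; simp at hb; exact ho _ _ (by omega)
  have PP : ∀ n m, n ≤ m → P n * P m = P n := by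
    intro n m h
    change (∑ k ∈ Finset.range n, p k) * P m = _
    rw [Finset.sum_mul]
    apply Finset.sum_congr rfl
    intro k hk; simp at hk; exact pP _ _ (by omega)
  have Pu : ∀ n m, n ≤ m → P n * u m = u n := by
    intro n m h
    simp only [u, Finset.mul_sum, ← mul_assoc]
    rw [← Finset.sum_subset (Finset.range_mono h)]
    · apply Finset.sum_congr rfl
      intro k hk; simp at hk; rw [Pp _ _ hk]
    · intro k _ hk; simp at hk; rw [Pp0 _ _ hk, zero_mul]
  let I : ℕ → Ideal Q := fun n =>
    { carrier := {x | x * P n = x}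
      add_mem' := by intro a b ha hb; simp only [Set.mem_ofPred_eq] at *; rw [add_mul, ha, hb]
      zero_mem' := by simp
      smul_mem' := by intro r x hx; simp only [Set.mem_ofPred_eq, smul_eq_mul] at *
                      rw [mul_assoc, hx] }
  have memI : ∀ n x, x ∈ I n ↔ x * P n = x := fun n x => Iff.rfl
  obtain ⟨c, hc⟩ := glue hinj I (by
    intro n m h x hx
    rw [memI] at *
    rw [← hx, mul_assoc, PP _ _ h]) u (by
    intro n m h x hx
    rw [memI] at hx
    rw [← hx, mul_assoc, mul_assoc, Pu _ _ h, Pu _ _ le_rfl])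
  refine ⟨c, fun k => ?_⟩
  rw [hc (k + 1) (p k) (pP _ _ (Nat.lt_succ_self k))]
  simp only [u, Finset.mul_sum, ← mul_assoc]
  rw [Finset.sum_eq_single k]
  · rw [hp]
  · intro b _ hb; rw [ho _ _ hb.symm, zero_mul]
  · intro h; simp at h

/-- `e` is isomorphic to a subidempotent of `f`. -/
def Emb (e f : Q) : Prop :=
  ∃ u v : Q, v * u = e ∧ f * u = u ∧ u * e = u ∧ v * f = v ∧ e * v = v

/-- Partial isomorphism inside `(e, f)`. -/
def Adm (e f a b : Q) : Prop :=
  e * a = a ∧ a * f = a ∧ f * b = b ∧ b * e = b ∧ a * b * a = a ∧ b * a * b = b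

theorem simple_prime [IsSimpleRing Q] {x y : Q} (hx : x ≠ 0) (hy : y ≠ 0) :
    ∃ q, x * q * y ≠ 0 := by
  by_contra! h
  let J : TwoSidedIdeal Q := TwoSidedIdeal.mk' {z | ∀ q, x * q * z = 0}
    (by simp) (by intro a b ha hb q; rw [mul_add, ha, hb, add_zero])
    (by intro a ha q; rw [mul_neg, ha, neg_zero])
    (by intro a b hb q; rw [← mul_assoc, mul_assoc x, hb])
    (by intro a b hb q; rw [← mul_assoc, hb, zero_mul])
  have hJ : ∀ z, z ∈ J ↔ ∀ q, x * q * z = 0 := fun z => by simp [J]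
  rcases IsSimpleOrder.eq_bot_or_eq_top J with h' | h'
  · have : y ∈ J := (hJ y).2 h
    rw [h', TwoSidedIdeal.mem_bot] at this
    exact hy this
  · have : (1 : Q) ∈ J := by rw [h']; trivial
    have := (hJ 1).1 this 1
    simp at this
    exact hx this

theorem compar_aux (hN : IsRankFunction N) (hreg : VNRegular Q) [IsSimpleRing Q]
    (hinj : Module.Baer Q Q) (e f : Q) (he : e * e = e) (hf : f * f = f) :
    Emb e f ∨ Emb f e := by
  classical
  have hP := hN.1
  -- greedy step
  have step : ∀ (n : ℕ) (s : Q × Q), (s.1 * s.1 = s.1 ∧ s.2 * s.2 = s.2) →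
      ∃ s' : Q × Q, (s'.1 * s'.1 = s'.1 ∧ s'.2 * s'.2 = s'.2) ∧
        ∃ a b, Adm s.1 s.2 a b ∧ (∀ a' b', Adm s.1 s.2 a' b' → N a' ≤ 2 * N a) ∧
          s'.1 = s.1 - a * b ∧ s'.2 = s.2 - b * a := by
    rintro n ⟨e', f'⟩ ⟨he', hf'⟩
    dsimp only at *
    let S : Set ℝ := {t | ∃ a b, Adm e' f' a b ∧ N a = t}
    have hS0 : (0 : ℝ) ∈ S := ⟨0, 0, by simp [Adm], pr_zero hP⟩
    have hSb : BddAbove S := ⟨1, by rintro t ⟨a, b, _, rfl⟩; exact hP.le_one a⟩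
    have : ∃ a b, Adm e' f' a b ∧ sSup S ≤ 2 * N a := by
      have hs0 : 0 ≤ sSup S := le_csSup hSb hS0
      rcases hs0.eq_or_lt with h | h
      · exact ⟨0, 0, by simp [Adm], by rw [← h, pr_zero hP]; simp⟩
      · obtain ⟨t, ⟨a, b, hab, rfl⟩, ht⟩ := exists_lt_of_lt_csSup ⟨0, hS0⟩ (half_lt_self h)
        exact ⟨a, b, hab, by linarith⟩
    obtain ⟨a, b, hab, hmax⟩ := this
    have hab' := hab
    obtain ⟨h1, h2, h3, h4, h5, h6⟩ := hab'
    refine ⟨(e' - a * b, f' - b * a), ⟨?_, ?_⟩, a, b, hab, ?_, rfl, rfl⟩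
    · apply idem_sub he'
      · rw [← mul_assoc, h5]
      · rw [← mul_assoc, h1]
      · rw [mul_assoc, h4]
    · apply idem_sub hf'
      · rw [← mul_assoc, h6]
      · rw [← mul_assoc, h3]
      · rw [mul_assoc, h2]
    · intro a' b' h
      exact (le_csSup hSb ⟨a', b', h, rfl⟩).trans hmax
  obtain ⟨s, hs0, hs⟩ := exists_seq_rel
    (fun (_ : ℕ) (s : Q × Q) => s.1 * s.1 = s.1 ∧ s.2 * s.2 = s.2)
    (fun (_ : ℕ) (s s' : Q × Q) => ∃ a b, Adm s.1 s.2 a b ∧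
      (∀ a' b', Adm s.1 s.2 a' b' → N a' ≤ 2 * N a) ∧
          s'.1 = s.1 - a * b ∧ s'.2 = s.2 - b * a) (e, f) ⟨he, hf⟩ step
  choose hid a b hab hmax hE hF using hs
  let E : ℕ → Q := fun n => (s n).1
  let F : ℕ → Q := fun n => (s n).2
  have hEn : ∀ n, E (n + 1) = E n - a n * b n := hE
  have hFn : ∀ n, F (n + 1) = F n - b n * a n := hF
  have hEi : ∀ n, E n * E n = E n := fun n => (hid n).1
  have hFi : ∀ n, F n * F n = F n := fun n => (hid n).2
  have Ea : ∀ n, E n * a n = a n := fun n => (hab n).1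
  have aF : ∀ n, a n * F n = a n := fun n => (hab n).2.1
  have Fb : ∀ n, F n * b n = b n := fun n => (hab n).2.2.1
  have bE : ∀ n, b n * E n = b n := fun n => (hab n).2.2.2.1
  have aba : ∀ n, a n * b n * a n = a n := fun n => (hab n).2.2.2.2.1
  have bab : ∀ n, b n * a n * b n = b n := fun n => (hab n).2.2.2.2.2
  have E0 : E 0 = e := by simp [E, hs0]
  have F0 : F 0 = f := by simp [F, hs0]
  -- absorption
  have EE : ∀ n m, n ≤ m → E n * E m = E m ∧ E m * E n = E m := by
    intro n m h
    induction m, h using Nat.le_induction with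
    | base => exact ⟨hEi n, hEi n⟩
    | succ m _ ih =>
      have x1 : E n * a m = a m := by rw [← Ea m, ← mul_assoc, ih.1]
      have x2 : b m * E n = b m := by rw [← bE m, mul_assoc, ih.2]
      rw [hEn]
      constructor
      · rw [mul_sub, ih.1, ← mul_assoc, x1]
      · rw [sub_mul, ih.2, mul_assoc, x2]
  have FF : ∀ n m, n ≤ m → F n * F m = F m ∧ F m * F n = F m := by
    intro n m h
    induction m, h using Nat.le_induction with
    | base => exact ⟨hFi n, hFi n⟩
    | succ m _ ih =>
      have x1 : F n * b m = b m := by rw [← Fb m, ← mul_assoc, ih.1]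
      have x2 : a m * F n = a m := by rw [← aF m, mul_assoc, ih.2]
      rw [hFn]
      constructor
      · rw [mul_sub, ih.1, ← mul_assoc, x1]
      · rw [sub_mul, ih.2, mul_assoc, x2]
  have bE1 : ∀ n, b n * E (n + 1) = 0 := by
    intro n; rw [hEn, mul_sub, bE, ← mul_assoc, bab, sub_self]
  have E1a : ∀ n, E (n + 1) * a n = 0 := by
    intro n; rw [hEn, sub_mul, Ea, aba, sub_self]
  have aF1 : ∀ n, a n * F (n + 1) = 0 := by
    intro n; rw [hFn, mul_sub, aF, ← mul_assoc, aba, sub_self]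
  have F1b : ∀ n, F (n + 1) * b n = 0 := by
    intro n; rw [hFn, sub_mul, Fb, bab, sub_self]
  have ba0 : ∀ j k, j ≠ k → b j * a k = 0 := by
    intro j k h
    rcases lt_or_gt_of_ne h with h | h
    · rw [← Ea k, ← (EE (j + 1) k h).1, mul_assoc, ← mul_assoc (b j), bE1, zero_mul]
    · rw [← bE j, ← (EE (k + 1) j h).2, mul_assoc, mul_assoc, E1a, mul_zero, mul_zero]
  have ab0 : ∀ j k, j ≠ k → a j * b k = 0 := by
    intro j k h
    rcases lt_or_gt_of_ne h with h | h
    · rw [← Fb k, ← (FF (j + 1) k h).1, mul_assoc, ← mul_assoc (a j), aF1, zero_mul]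
    · rw [← aF j, ← (FF (k + 1) j h).2, mul_assoc, mul_assoc, F1b, mul_zero, mul_zero]
  have ea : ∀ n, e * a n = a n := by
    intro n; rw [← Ea n, ← mul_assoc, ← E0, (EE 0 n (Nat.zero_le _)).1]
  have fb : ∀ n, f * b n = b n := by
    intro n; rw [← Fb n, ← mul_assoc, ← F0, (FF 0 n (Nat.zero_le _)).1]
  have be : ∀ n, b n * e = b n := by
    intro n; rw [← bE n, mul_assoc, ← E0, (EE 0 n (Nat.zero_le _)).2]
  have af : ∀ n, a n * f = a n := by
    intro n; rw [← aF n, mul_assoc, ← F0, (FF 0 n (Nat.zero_le _)).2]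
  obtain ⟨c, hc⟩ := interp hinj (fun k => a k * b k) a
    (fun k => by rw [← mul_assoc, aba])
    (fun j k h => by rw [mul_assoc, ← mul_assoc (b j), ba0 j k h, zero_mul, mul_zero])
  obtain ⟨d, hd⟩ := interp hinj (fun k => b k * a k) b
    (fun k => by rw [← mul_assoc, bab])
    (fun j k h => by rw [mul_assoc, ← mul_assoc (a j), ab0 j k h, zero_mul, mul_zero])
  simp only [aba] at hc
  simp only [bab] at hd
  -- cut down
  let c' := e * c * f
  let d' := f * d * e
  have hc' : ∀ k, a k * b k * c' = a k := by
    intro k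
    simp only [c', ← mul_assoc]
    rw [mul_assoc (a k) (b k) e, be, hc, af]
  have hd' : ∀ k, b k * a k * d' = b k := by
    intro k
    simp only [d', ← mul_assoc]
    rw [mul_assoc (b k) (a k) f, af, hd, be]
  have ec : e * c' = c' := by simp only [c', ← mul_assoc, he]
  have cf : c' * f = c' := by simp only [c', mul_assoc, hf]
  have fd : f * d' = d' := by simp only [d', ← mul_assoc, hf]
  have de : d' * e = d' := by simp only [d', mul_assoc, he]
  clear_value c' d'
  have had : ∀ k, a k * d' = a k * b k := by
    intro k
    conv_rhs => rw [← hd' k, ← mul_assoc, ← mul_assoc, aba]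
  have hbc : ∀ k, b k * c' = b k * a k := by
    intro k
    conv_rhs => rw [← hc' k, ← mul_assoc, ← mul_assoc, bab]
  have hx : ∀ k, a k * b k * (e - c' * d') = 0 := by
    intro k
    rw [mul_sub, mul_assoc, be, ← mul_assoc, hc', had, sub_self]
  have hy : ∀ k, b k * a k * (f - d' * c') = 0 := by
    intro k
    rw [mul_sub, mul_assoc, af, ← mul_assoc, hd', hbc, sub_self]
  by_cases hx0 : e - c' * d' = 0
  · left
    exact ⟨d', c', (sub_eq_zero.1 hx0).symm, fd, de, cf, ec⟩
  by_cases hy0 : f - d' * c' = 0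
  · right
    exact ⟨c', d', (sub_eq_zero.1 hy0).symm, ec, cf, de, fd⟩
  exfalso
  set x := e - c' * d' with hxdef
  set y := f - d' * c' with hydef
  have ex : e * x = x := by rw [hxdef, mul_sub, he, ← mul_assoc, ec]
  have fy : f * y = y := by rw [hydef, mul_sub, hf, ← mul_assoc, fd]
  obtain ⟨q, hq⟩ := simple_prime hx0 hy0
  obtain ⟨w, hw⟩ := hreg (x * q * y)
  set z := x * q * y with hz
  let g := z * w
  have gg : g * g = g := by simp only [g, ← mul_assoc, ← hw]
  have g0 : g ≠ 0 := by
    intro h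
    apply hq
    rw [hw]; change g * z = 0; rw [h, zero_mul]
  let a0 := g * (x * q)
  let b0 := y * w * g
  have a0b0 : a0 * b0 = g := by
    have : a0 * b0 = g * (x * q * y) * w * g := by simp only [a0, b0, mul_assoc]
    rw [this, ← hz]
    have : g * z = z := hw.symm
    rw [this]; exact gg
  have ga0 : g * a0 = a0 := by simp only [a0, ← mul_assoc, gg]
  have b0g : b0 * g = b0 := by simp only [b0, mul_assoc, gg]
  have hEa0 : ∀ n, E n * a0 = a0 := by
    have xa0 : a0 = x * (q * y * w * (x * q)) := by simp only [a0, g, hz, mul_assoc]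
    intro n
    induction n with
    | zero => rw [E0, xa0, ← mul_assoc, ex]
    | succ n ih => rw [hEn, sub_mul, ih, xa0, ← mul_assoc (a n * b n), hx, zero_mul, sub_zero]
  have hFb0 : ∀ n, F n * b0 = b0 := by
    have yb0 : b0 = y * (w * g) := by simp only [b0, mul_assoc]
    intro n
    induction n with
    | zero => rw [F0, yb0, ← mul_assoc, fy]
    | succ n ih => rw [hFn, sub_mul, ih, yb0, ← mul_assoc (b n * a n), hy, zero_mul, sub_zero]
  have gpos : 0 < N g := lt_of_le_of_ne (hP.nonneg g) fun h => g0 (hN.2 g h.symm)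
  have hbig : ∀ n, N g ≤ 2 * N (a n) := by
    intro n
    have adm : Adm (E n) (F n) (a0 * F n) (b0 * E n) := by
      have k1 : a0 * F n * (b0 * E n) = g * E n := by
        rw [mul_assoc, ← mul_assoc (F n), hFb0, ← mul_assoc, a0b0]
      have k2 : b0 * E n * (a0 * F n) = b0 * a0 * F n := by
        rw [mul_assoc, ← mul_assoc (E n), hEa0, ← mul_assoc]
      refine ⟨?_, ?_, ?_, ?_, ?_, ?_⟩
      · rw [← mul_assoc, hEa0]
      · rw [mul_assoc, hFi]
      · rw [← mul_assoc, hFb0]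
      · rw [mul_assoc, hEi]
      · rw [k1, mul_assoc, ← mul_assoc (E n), hEa0, ← mul_assoc, ga0]
      · rw [k2, mul_assoc, ← mul_assoc (F n), hFb0, mul_assoc, ← mul_assoc a0, a0b0,
          ← mul_assoc, b0g]
    have h1 := hmax n _ _ adm
    have h2 : N g ≤ N (a0 * F n) := by
      have : g = a0 * F n * b0 := by rw [mul_assoc, hFb0, a0b0]
      rw [this]; exact hP.mul_le_left _ _
    linarith
  have hdec : ∀ n : ℕ, N (E n) ≤ 1 - n * (N g / 2) := by
    intro n
    induction n with
    | zero => simpa using hP.le_one _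
    | succ n ih =>
      have h1 : N (E (n + 1)) = N (E n) - N (a n * b n) := by
        rw [hEn]
        apply pr_idem_sub hP (hEi n)
        · rw [← mul_assoc, aba]
        · rw [← mul_assoc, Ea]
        · rw [mul_assoc, bE]
      have h2 : N (a n) ≤ N (a n * b n) := by
        conv_lhs => rw [← aba n]
        exact hP.mul_le_left _ _
      have := hbig n
      push_cast
      linarith
  obtain ⟨n, hn⟩ := exists_nat_gt (1 / (N g / 2))
  have h1 := hdec n
  have h2 := hP.nonneg (E n)
  rw [div_lt_iff₀ (by positivity)] at hn
  linarith

theorem emb_rank (hP : IsPseudoRankFunction N) {e u v : Q} (h1 : v * u = e) (h2 : u * e = u)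
    (he : e * e = e) : N (u * v) = N e := by
  apply le_antisymm
  · rw [← h2]; exact pr_mul3 hP _ _ _
  · have : e = v * (u * v) * u := by
      rw [← mul_assoc v, h1, mul_assoc, h1, he]
    rw [this]; exact pr_mul3 hP _ _ _

/-- Comparison property for the rank function `N`. -/
def Cmp (N : Q → ℝ) : Prop :=
  ∀ e f : Q, e * e = e → f * f = f → N e ≤ N f → Emb e f

theorem compar (hN : IsRankFunction N) (hreg : VNRegular Q) [IsSimpleRing Q]
    (hinj : Module.Baer Q Q) : Cmp N := by
  intro e f he hf h
  rcases compar_aux hN hreg hinj e f he hf with h' | ⟨u, v, h1, h2, h3, h4, h5⟩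
  · exact h'
  · -- `f` embeds in `e`
    have uv : u * v * (u * v) = u * v := by
      rw [mul_assoc, ← mul_assoc v, h1, h5]
    have k1 := pr_idem_sub hN.1 he uv (by rw [← mul_assoc, h2]) (by rw [mul_assoc, h4])
    have k2 := emb_rank hN.1 h1 h3 hf
    have k3 : N (e - u * v) = 0 := le_antisymm (by linarith) (hN.1.nonneg _)
    have k4 := sub_eq_zero.1 (hN.2 _ k3)
    exact ⟨v, u, k4.symm, h5, h4, h3, h2⟩

end Basics

section Frames

variable {Q : Type*} [Ring Q] {N : Q → ℝ}

/-- A family of partial isomorphisms from `π` onto orthogonal subidempotents of `e`. -/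
structure IsFrame {ι : Type*} (π e : Q) (u v : ι → Q) : Prop where
  same : ∀ i, v i * u i = π
  ne : ∀ i j, i ≠ j → v i * u j = 0
  uπ : ∀ i, u i * π = u i
  πv : ∀ i, π * v i = v i
  eu : ∀ i, e * u i = u i
  ve : ∀ i, v i * e = v i

theorem IsFrame.idem {ι : Type*} {π e : Q} {u v : ι → Q} (h : IsFrame π e u v) (i : ι) :
    u i * v i * (u i * v i) = u i * v i := by
  rw [mul_assoc, ra (h.same i), h.πv]

theorem IsFrame.orth {ι : Type*} {π e : Q} {u v : ι → Q} (h : IsFrame π e u v) (i j : ι)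
    (hij : i ≠ j) : u i * v i * (u j * v j) = 0 := by
  rw [mul_assoc, ra (h.ne i j hij), zero_mul, mul_zero]

theorem IsFrame.sum_mul_u {ι : Type*} [Fintype ι] {π e : Q} {u v : ι → Q}
    (h : IsFrame π e u v) (j : ι) : (∑ i, u i * v i) * u j = u j := by
  classical
  rw [Finset.sum_mul, Finset.sum_eq_single j]
  · rw [mul_assoc, h.same, h.uπ]
  · intro b _ hb; rw [mul_assoc, h.ne _ _ hb, mul_zero]
  · simp

theorem IsFrame.v_mul_sum {ι : Type*} [Fintype ι] {π e : Q} {u v : ι → Q}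
    (h : IsFrame π e u v) (j : ι) : v j * (∑ i, u i * v i) = v j := by
  classical
  rw [Finset.mul_sum, Finset.sum_eq_single j]
  · rw [← mul_assoc, h.same, h.πv]
  · intro b _ hb; rw [← mul_assoc, h.ne _ _ hb.symm, zero_mul]
  · simp

theorem IsFrame.sum_idem {ι : Type*} [Fintype ι] {π e : Q} {u v : ι → Q}
    (h : IsFrame π e u v) :
    (∑ i, u i * v i) * (∑ i, u i * v i) = ∑ i, u i * v i := by
  rw [Finset.mul_sum]
  exact Finset.sum_congr rfl fun i _ => by rw [← mul_assoc, h.sum_mul_u]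

theorem IsFrame.e_sum {ι : Type*} [Fintype ι] {π e : Q} {u v : ι → Q}
    (h : IsFrame π e u v) : e * (∑ i, u i * v i) = ∑ i, u i * v i := by
  rw [Finset.mul_sum]
  exact Finset.sum_congr rfl fun i _ => by rw [← mul_assoc, h.eu]

theorem IsFrame.sum_e {ι : Type*} [Fintype ι] {π e : Q} {u v : ι → Q}
    (h : IsFrame π e u v) : (∑ i, u i * v i) * e = ∑ i, u i * v i := by
  rw [Finset.sum_mul]
  exact Finset.sum_congr rfl fun i _ => by rw [mul_assoc, h.ve]

theorem IsFrame.rank {ι : Type*} [Fintype ι] {π e : Q} {u v : ι → Q}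
    (h : IsFrame π e u v) (hP : IsPseudoRankFunction N) (hπ : π * π = π) :
    N (∑ i, u i * v i) = Fintype.card ι * N π := by
  rw [(pr_sum_orth hP Finset.univ (fun i => u i * v i) h.idem h.orth).1]
  rw [Finset.sum_congr rfl fun i _ => emb_rank hP (h.same i) (h.uπ i) hπ]
  simp

theorem frame_exists (hP : IsPseudoRankFunction N) (hc : Cmp N) {π e : Q} (hπ : π * π = π)
    (he : e * e = e) (a : ℕ) (ha : a * N π ≤ N e) :
    ∃ u v : Fin a → Q, IsFrame π e u v := by
  induction a with
  | zero => exact ⟨fun _ => 0, fun _ => 0, by constructor <;> intro i <;> exact i.elim0⟩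
  | succ a ih =>
    have hπ0 := hP.nonneg π
    push_cast at ha
    obtain ⟨u, v, h⟩ := ih (by linarith)
    set p := ∑ i, u i * v i with hp
    have hr := h.rank hP hπ
    rw [← hp, Fintype.card_fin] at hr
    have hep : e * p = p := h.e_sum
    have hpe : p * e = p := h.sum_e
    have hpp : p * p = p := h.sum_idem
    have hid := idem_sub he hpp hep hpe
    have hrk := pr_idem_sub hP he hpp hep hpe
    obtain ⟨x, y, h1, h2, h3, h4, h5⟩ := hc π (e - p) hπ hid (by linarith)
    have px : p * x = 0 := by rw [← h2, ← mul_assoc, mul_sub, hpe, hpp]; simp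
    have yp : y * p = 0 := by rw [← h4, mul_assoc, sub_mul, hep, hpp]; simp
    have ex : e * x = x := by rw [← h2, ← mul_assoc, mul_sub, hep, he]
    have ye : y * e = y := by rw [← h4, mul_assoc, sub_mul, hpe, he]
    have vx : ∀ i, v i * x = 0 := by
      intro i; rw [← h.v_mul_sum i, mul_assoc, ← hp, px, mul_zero]
    have yu : ∀ i, y * u i = 0 := by
      intro i; rw [← h.sum_mul_u i, ← mul_assoc, ← hp, yp, zero_mul]
    refine ⟨Fin.cons x u, Fin.cons y v, ?_, ?_, ?_, ?_, ?_, ?_⟩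
    · intro i; refine Fin.cases ?_ (fun i => ?_) i <;> simp [h1, h.same]
    · intro i j
      refine Fin.cases ?_ (fun i => ?_) i <;> refine Fin.cases ?_ (fun j => ?_) j
      · simp
      · simp [yu]
      · simp [vx]
      · intro hij; simpa using h.ne i j (by rintro rfl; exact hij rfl)
    · intro i; refine Fin.cases ?_ (fun i => ?_) i <;> simp [h3, h.uπ]
    · intro i; refine Fin.cases ?_ (fun i => ?_) i <;> simp [h5, h.πv]
    · intro i; refine Fin.cases ?_ (fun i => ?_) i <;> simp [ex, h.eu]
    · intro i; refine Fin.cases ?_ (fun i => ?_) i <;> simp [ye, h.ve]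

theorem frame_full (hN : IsRankFunction N) {ι : Type*} [Fintype ι] {π e : Q} {u v : ι → Q}
    (h : IsFrame π e u v) (hπ : π * π = π) (he : e * e = e)
    (hr : Fintype.card ι * N π = N e) : ∑ i, u i * v i = e := by
  have h1 := pr_idem_sub hN.1 he h.sum_idem h.e_sum h.sum_e
  rw [h.rank hN.1 hπ, hr, sub_self] at h1
  exact (sub_eq_zero.1 (hN.2 _ h1)).symm

/-- All values in the unit interval are ranks of idempotents. -/
def Onto (N : Q → ℝ) : Prop := ∀ t : ℝ, 0 ≤ t → t ≤ 1 → ∃ e : Q, e * e = e ∧ N e = t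

theorem idem_of_reg (hP : IsPseudoRankFunction N) (hreg : VNRegular Q) (x : Q) :
    ∃ e : Q, e * e = e ∧ N e = N x ∧ e * x = x ∧ ∃ y, e = x * y := by
  obtain ⟨y, hy⟩ := hreg x
  refine ⟨x * y, by rw [← mul_assoc, ← hy], ?_, hy.symm, y, rfl⟩
  apply le_antisymm (hP.mul_le_left _ _)
  conv_lhs => rw [hy]
  exact hP.mul_le_left _ _

theorem onto_of_range (hP : IsPseudoRankFunction N) (hreg : VNRegular Q)
    (hr : Set.range N = Set.Icc (0 : ℝ) 1) : Onto N := by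
  intro t h0 h1
  have : t ∈ Set.range N := by rw [hr]; exact ⟨h0, h1⟩
  obtain ⟨x, rfl⟩ := this
  obtain ⟨e, he, h, _⟩ := idem_of_reg hP hreg x
  exact ⟨e, he, h⟩

theorem rank_unique {N₀ : Q → ℝ} (hN : IsRankFunction N) (hN₀ : IsRankFunction N₀)
    (hreg : VNRegular Q) (hc₀ : Cmp N₀) (hon : Onto N₀) : N = N₀ := by
  have key : ∀ e : Q, e * e = e → N₀ e ≤ N e := by
    intro e he
    apply le_of_forall_pos_le_add
    intro ε hε
    obtain ⟨m, hm⟩ := exists_nat_gt (1 / ε)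
    have hm0 : (0 : ℝ) < m := lt_trans (by positivity) hm
    have hm1 : (1 : ℝ) ≤ m := by
      have : 0 < m := by exact_mod_cast hm0
      exact_mod_cast this
    obtain ⟨π, hπ, hr⟩ := hon (1 / m) (by positivity) (by rw [div_le_one hm0]; exact hm1)
    have hmm : (m : ℝ) * N₀ π = 1 := by rw [hr]; field_simp
    obtain ⟨u, v, h⟩ := frame_exists hN₀.1 hc₀ hπ (mul_one 1) m (by rw [hmm, hN₀.1.map_one])
    have h1 := frame_full hN₀ h hπ (mul_one 1) (by rw [Fintype.card_fin, hmm, hN₀.1.map_one])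
    have h2 := h.rank hN.1 hπ
    rw [h1, hN.1.map_one, Fintype.card_fin] at h2
    have he0 := hN₀.1.nonneg e
    have hfl : ((⌊(m : ℝ) * N₀ e⌋₊ : ℕ) : ℝ) ≤ m * N₀ e := Nat.floor_le (by positivity)
    have hfl2 : (m : ℝ) * N₀ e < (⌊(m : ℝ) * N₀ e⌋₊ : ℕ) + 1 := Nat.lt_floor_add_one _
    set a := ⌊(m : ℝ) * N₀ e⌋₊
    obtain ⟨u', v', h'⟩ := frame_exists hN₀.1 hc₀ hπ he a (by
      rw [hr, mul_one_div, div_le_iff₀ hm0]; linarith)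
    have h3 := h'.rank hN.1 hπ
    rw [Fintype.card_fin] at h3
    have h4 : N (∑ i, u' i * v' i) ≤ N e := by
      rw [← h'.e_sum]; exact hN.1.mul_le_left _ _
    have h5 : N π = 1 / m := by field_simp; linarith
    rw [h5] at h3
    rw [div_lt_iff₀ hε] at hm
    rw [h3, mul_one_div, div_le_iff₀ hm0] at h4
    have h6 : m * N₀ e ≤ m * (N e + ε) := by nlinarith
    exact le_of_mul_le_mul_left h6 hm0
  have key2 : ∀ e : Q, e * e = e → N₀ e = N e := by
    intro e he
    apply le_antisymm (key e he)
    have h1 := key (1 - e) (idem_sub (mul_one 1) he (one_mul e) (mul_one e))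
    rw [pr_idem_sub hN₀.1 (mul_one 1) he (one_mul e) (mul_one e),
      pr_idem_sub hN.1 (mul_one 1) he (one_mul e) (mul_one e), hN.1.map_one, hN₀.1.map_one] at h1
    linarith
  ext x
  obtain ⟨y, hy⟩ := hreg x
  have h : ∀ N : Q → ℝ, IsPseudoRankFunction N → N (x * y) = N x := by
    intro N hP
    apply le_antisymm (hP.mul_le_left _ _)
    conv_lhs => rw [hy]
    exact hP.mul_le_left _ _
  rw [← h N hN.1, ← h N₀ hN₀.1]
  exact (key2 _ (by rw [← mul_assoc, ← hy])).symm

/-- A small element acting as a right identity on a summable sequence. -/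
theorem small_support (hN : IsRankFunction N) (hreg : VNRegular Q) (hinj : Module.Baer Q Q)
    (hc : Cmp N) (hon : Onto N) (x : ℕ → Q) (s : ℝ) (hs0 : 0 ≤ s) (hs1 : s ≤ 1)
    (hx : ∀ k, N (x k) ≤ s / 2 ^ (k + 1)) :
    ∃ h : Q, N h ≤ s ∧ ∀ k, x k * h = x k := by
  have hP := hN.1
  obtain ⟨f, hf, hfr⟩ := hon s hs0 hs1
  obtain ⟨st, hst0, hst⟩ := exists_seq_rel
    (fun (k : ℕ) (s' : Q × Q) => s'.1 * s'.1 = s'.1 ∧ s'.2 * s'.2 = s'.2 ∧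
      s / 2 ^ k ≤ N s'.2 ∧ s'.2 * f = s'.2)
    (fun (k : ℕ) (s' s'' : Q × Q) => ∃ u w, w * u * (w * u) = w * u ∧ s'.1 * (w * u) = 0 ∧
      w * u * s'.1 = 0 ∧ s''.1 = s'.1 + w * u ∧ s''.2 = s'.2 - u * w ∧ s'.2 * u = u ∧
      u * (w * u) = u ∧ w * s'.2 = w ∧ w * u * w = w ∧ x k * s''.1 = x k)
    (0, f) ⟨by simp, hf, by simp [hfr], hf⟩ (by
      rintro k ⟨H, F⟩ ⟨hH, hF, hFr, hFf⟩
      dsimp only at *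
      obtain ⟨y, hy⟩ := hreg (x k * (1 - H))
      have h1H : (1 - H) * (1 - H) = 1 - H := idem_sub (mul_one 1) hH (one_mul H) (mul_one H)
      set h' := (1 - H) * y * (x k * (1 - H)) with hh'
      have hid : h' * h' = h' := by
        have : h' * h' = (1 - H) * y * (x k * ((1 - H) * (1 - H)) * y * (x k * (1 - H))) := by
          rw [hh']; simp only [mul_assoc]
        rw [this, h1H, ← hy]
      have Hh : H * h' = 0 := by
        have z : H * (1 - H) = 0 := by rw [mul_sub, hH]; simp
        rw [hh', mul_assoc, ra z, zero_mul]
      have hHh : h' * H = 0 := by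
        have z : (1 - H) * H = 0 := by rw [sub_mul, hH]; simp
        rw [hh', mul_assoc, mul_assoc (x k), z, mul_zero, mul_zero]
      have hxh : x k * h' = x k * (1 - H) := by
        have : x k * h' = x k * (1 - H) * y * (x k * (1 - H)) := by
          rw [hh']; simp only [mul_assoc]
        rw [this, ← hy]
      have hr : N h' ≤ N (x k) := (hP.mul_le_right _ _).trans (hP.mul_le_left _ _)
      have hp : s / 2 ^ (k + 1) = s / 2 ^ k / 2 := by rw [pow_succ]; field_simp
      have hxk := hx k
      have hsk : 0 ≤ s / 2 ^ k := by positivity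
      obtain ⟨u, w, h1, h2, h3, h4, h5⟩ := hc h' F hid hF (by rw [hp] at hxk; linarith)
      have huw : u * w * (u * w) = u * w := by rw [mul_assoc, ra h1, h5]
      have Fuw : F * (u * w) = u * w := by rw [← mul_assoc, h2]
      have uwF : u * w * F = u * w := by rw [mul_assoc, h4]
      refine ⟨(H + h', F - u * w), ⟨?_, ?_, ?_, ?_⟩, u, w, ?_⟩
      · simp [mul_add, add_mul, hH, Hh, hHh, hid]
      · exact idem_sub hF huw Fuw uwF
      · dsimp only
        rw [pr_idem_sub hP hF huw Fuw uwF, emb_rank hP h1 h3 hid, hp]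
        rw [hp] at hxk; linarith
      · dsimp only
        rw [sub_mul, hFf, ← uwF, mul_assoc (u * w), hFf]
      · dsimp only
        rw [h1]
        refine ⟨hid, Hh, hHh, rfl, rfl, h2, h3, h4, h5, ?_⟩
        rw [mul_add, hxh, mul_sub]; simp)
  choose hst u w hid Hp pH hH hF Fu upu wF pw hxk using hst
  let H : ℕ → Q := fun n => (st n).1
  let F : ℕ → Q := fun n => (st n).2
  have hHn : ∀ n, H (n + 1) = H n + w n * u n := hH
  have hFn : ∀ n, F (n + 1) = F n - u n * w n := hF
  have hHi : ∀ n, H n * H n = H n := fun n => (hst n).1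
  have hFi : ∀ n, F n * F n = F n := fun n => (hst n).2.1
  have hFf : ∀ n, F n * f = F n := fun n => (hst n).2.2.2
  have Fu : ∀ n, F n * u n = u n := Fu
  have wF : ∀ n, w n * F n = w n := wF
  have Hp : ∀ n, H n * (w n * u n) = 0 := Hp
  have pH : ∀ n, (w n * u n) * H n = 0 := pH
  have hxk : ∀ n, x n * H (n + 1) = x n := hxk
  have HH : ∀ n k, n ≤ k → H n * (w k * u k) = 0 ∧ (w k * u k) * H n = 0 ∧
      H n * H k = H n ∧ H k * H n = H n := by
    have : ∀ n k, n ≤ k → H n * H k = H n ∧ H k * H n = H n := by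
      intro n k h
      induction k, h using Nat.le_induction with
      | base => exact ⟨hHi n, hHi n⟩
      | succ k _ ih =>
        have y1 : H n * (w k * u k) = 0 := by
          rw [← ih.1, mul_assoc, Hp, mul_zero]
        have y2 : (w k * u k) * H n = 0 := by
          rw [← ih.2, ← mul_assoc, pH, zero_mul]
        rw [hHn, mul_add, add_mul, ih.1, ih.2, y1, y2]; simp
    intro n k h
    refine ⟨?_, ?_, this n k h⟩
    · rw [← (this n k h).1, mul_assoc, Hp, mul_zero]
    · rw [← (this n k h).2, ← mul_assoc, pH, zero_mul]
  have hsub : ∀ n, H (n + 1) * (w n * u n) = w n * u n ∧ w n * u n * H (n + 1) = w n * u n := by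
    intro n; rw [hHn, add_mul, mul_add, Hp, pH, hid]; simp
  have hpp : ∀ j k, j ≠ k → w j * u j * (w k * u k) = 0 := by
    intro j k h
    rcases lt_or_gt_of_ne h with h | h
    · rw [← (hsub j).2, mul_assoc, (HH (j + 1) k h).1, mul_zero]
    · rw [← (hsub k).1, ← mul_assoc, (HH (k + 1) j h).2.1, zero_mul]
  have FF : ∀ n m, n ≤ m → F n * F m = F m ∧ F m * F n = F m := by
    intro n m h
    induction m, h using Nat.le_induction with
    | base => exact ⟨hFi n, hFi n⟩
    | succ m _ ih =>
      have x1 : F n * u m = u m := by rw [← Fu m, ← mul_assoc, ih.1]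
      have x2 : w m * F n = w m := by rw [← wF m, mul_assoc, ih.2]
      rw [hFn]
      constructor
      · rw [mul_sub, ih.1, ← mul_assoc, x1]
      · rw [sub_mul, ih.2, mul_assoc, x2]
  have wF1 : ∀ n, w n * F (n + 1) = 0 := by
    intro n; rw [hFn, mul_sub, wF, ← mul_assoc, pw, sub_self]
  have F1u : ∀ n, F (n + 1) * u n = 0 := by
    intro n; rw [hFn, sub_mul, Fu, mul_assoc, upu, sub_self]
  have wu0 : ∀ j k, j ≠ k → w j * u k = 0 := by
    intro j k h
    rcases lt_or_gt_of_ne h with h | h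
    · rw [← Fu k, ← (FF (j + 1) k h).1, mul_assoc, ← mul_assoc (w j), wF1, zero_mul]
    · rw [← wF j, ← (FF (k + 1) j h).2, mul_assoc, mul_assoc, F1u, mul_zero, mul_zero]
  obtain ⟨c, hc⟩ := interp hinj (fun k => w k * u k) w hid hpp
  obtain ⟨d, hd⟩ := interp hinj (fun k => u k * w k) u
    (fun k => by rw [mul_assoc, ← mul_assoc (w k), pw])
    (fun j k h => by rw [mul_assoc, ra (wu0 j k h), zero_mul, mul_zero])
  simp only [pw] at hc
  simp only [mul_assoc, upu] at hd
  have wf : ∀ k, w k * f = w k := by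
    intro k; rw [← wF k, mul_assoc, hFf]
  have hpc : ∀ k, w k * u k * (c * f * d) = w k * u k := by
    intro k
    rw [← mul_assoc, ← mul_assoc, hc, wf]
    conv_lhs => rw [← pw k, mul_assoc, mul_assoc, hd]
  have hHc : ∀ n, H n * (c * f * d) = H n := by
    intro n
    induction n with
    | zero => simp [H, hst0]
    | succ n ih => rw [hHn, add_mul, ih, hpc]
  refine ⟨c * f * d, ?_, ?_⟩
  · rw [← hfr]; exact pr_mul3 hP _ _ _
  · intro k
    rw [← hxk k, mul_assoc, hHc]

theorem complete_of_inj (hN : IsRankFunction N) (hreg : VNRegular Q) (hinj : Module.Baer Q Q)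
    (hinj' : Module.Baer Qᵐᵒᵖ Qᵐᵒᵖ) (hc : Cmp N) (hon : Onto N) : RankComplete N := by
  have hP := hN.1
  intro u hu
  have : ∀ n : ℕ, ∃ m : ℕ, ∀ i j, m ≤ i → m ≤ j → N (u i - u j) < 1 / 2 ^ (n + 1) :=
    fun n => hu _ (by positivity)
  choose m hm using this
  let k : ℕ → ℕ := fun n => ∑ i ∈ Finset.range (n + 1), m i
  have hkm : ∀ n, m n ≤ k n := fun n =>
    Finset.single_le_sum (f := m) (fun _ _ => Nat.zero_le _) (by simp)
  have hk1 : ∀ n, k n ≤ k (n + 1) := fun n => by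
    simp only [k]; rw [Finset.sum_range_succ _ (n + 1)]; omega
  let x : ℕ → Q := fun n => u (k (n + 1)) - u (k n)
  have hx : ∀ n, N (x n) ≤ 1 / 2 ^ (n + 1) := fun n =>
    (hm n _ _ ((hkm n).trans (hk1 n)) (hkm n)).le
  have hsup : ∀ n : ℕ, ∃ h : Q, N h ≤ 1 / 2 ^ n ∧ ∀ j, n ≤ j → x j * h = x j := by
    intro n
    obtain ⟨h, h1, h2⟩ := small_support hN hreg hinj hc hon (fun j => x (n + j)) (1 / 2 ^ n)
      (by positivity) (by rw [div_le_one (by positivity)]; exact one_le_pow₀ (by norm_num)) (by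
        intro j
        refine (hx _).trans (le_of_eq ?_)
        rw [show n + j + 1 = n + (j + 1) by ring, pow_add]; field_simp)
    exact ⟨h, h1, fun j hj => by
      obtain ⟨i, rfl⟩ := Nat.exists_eq_add_of_le hj
      exact h2 i⟩
  choose h hh1 hh2 using hsup
  let I : ℕ → Ideal Qᵐᵒᵖ := fun n =>
    { carrier := {z | ∀ j, n ≤ j → x j * z.unop = 0}
      add_mem' := by intro a b ha hb j hj; simp [mul_add, ha j hj, hb j hj]
      zero_mem' := by simp
      smul_mem' := by intro r z hz j hj; simp [← mul_assoc, hz j hj] }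
  have memI : ∀ n z, z ∈ I n ↔ ∀ j, n ≤ j → x j * z.unop = 0 := fun n z => Iff.rfl
  obtain ⟨c, hc⟩ := glue hinj' I (by
    intro n n' hnn z hz
    rw [memI] at *
    exact fun j hj => hz j (hnn.trans hj)) (fun n => MulOpposite.op (u (k n))) (by
    intro n n' hnn z hz
    rw [memI] at hz
    induction n', hnn using Nat.le_induction with
    | base => rfl
    | succ n' hn ih =>
      rw [← ih]
      apply MulOpposite.unop_injective
      have := hz n' hn
      simp only [x, sub_mul, sub_eq_zero] at this
      simpa using this)
  have hcn : ∀ n, N (c.unop - u (k n)) ≤ 1 / 2 ^ n := by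
    intro n
    have h1 := hc n (MulOpposite.op (1 - h n)) (by
      rw [memI]
      intro j hj
      simp [mul_sub, hh2 n j hj])
    have h2 : c.unop * (1 - h n) = u (k n) * (1 - h n) := by
      have := congrArg MulOpposite.unop h1
      simpa using this
    have h3 : c.unop - u (k n) = (c.unop - u (k n)) * h n := by
      have : (c.unop - u (k n)) * (1 - h n) = 0 := by rw [sub_mul, h2, sub_self]
      rw [mul_sub, mul_one, sub_eq_zero] at this
      exact this
    rw [h3]
    exact (hP.mul_le_right _ _).trans (hh1 n)
  refine ⟨c.unop, fun ε hε => ?_⟩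
  obtain ⟨n, hn⟩ := exists_pow_lt_of_lt_one (show (0 : ℝ) < ε / 2 by positivity)
    (show (1 / 2 : ℝ) < 1 by norm_num)
  rw [div_pow, one_pow] at hn
  refine ⟨m n, fun i hi => ?_⟩
  have h1 := hm n i (k n) hi (hkm n)
  have h2 := hcn n
  have h3 := pr_tri hP (u i) (u (k n)) c.unop
  rw [pr_sub_comm hP (u (k n))] at h3
  have h4 : (1 : ℝ) / 2 ^ (n + 1) ≤ 1 / 2 ^ n := by
    apply one_div_le_one_div_of_le (by positivity)
    exact pow_le_pow_right₀ (by norm_num) (Nat.le_succ n)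
  linarith

end Frames

section Matrices

variable {K : Type*} [Field K]

theorem matrix_diag {n : ℕ} (M : Matrix (Fin n) (Fin n) K) :
    ∃ (X X' Y Y' : Matrix (Fin n) (Fin n) K) (s : Finset (Fin n)),
      X' * X = 1 ∧ X * X' = 1 ∧ Y * Y' = 1 ∧ Y' * Y = 1 ∧
        X * M * Y = ∑ i ∈ s, Matrix.single i i (1 : K) := by
  classical
  obtain ⟨L, L', D, h⟩ :=
    Matrix.Pivot.exists_list_transvec_mul_mul_list_transvec_eq_diagonal M
  have h1 := Matrix.TransvectionStruct.prod_mul_reverse_inv_prod L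
  have h2 := Matrix.TransvectionStruct.prod_mul_reverse_inv_prod L'
  set A := (L.map Matrix.TransvectionStruct.toMatrix).prod
  set B := (L'.map Matrix.TransvectionStruct.toMatrix).prod
  set A' := (L.reverse.map (Matrix.TransvectionStruct.toMatrix ∘ Matrix.TransvectionStruct.inv)).prod
  set B' := (L'.reverse.map (Matrix.TransvectionStruct.toMatrix ∘ Matrix.TransvectionStruct.inv)).prod
  let d : Fin n → K := fun i => if D i = 0 then 1 else (D i)⁻¹
  let d' : Fin n → K := fun i => if D i = 0 then 1 else D i
  have hdd : Matrix.diagonal d * Matrix.diagonal d' = (1 : Matrix (Fin n) (Fin n) K) := by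
    rw [Matrix.diagonal_mul_diagonal, ← Matrix.diagonal_one]
    congr 1; ext i; simp only [d, d']; split_ifs with h <;> simp [h]
  have hX : Matrix.diagonal d * A * (A' * Matrix.diagonal d') = 1 := by
    rw [mul_assoc, ra h1, one_mul, hdd]
  refine ⟨Matrix.diagonal d * A, A' * Matrix.diagonal d', B, B', Finset.univ.filter
    (fun i => D i ≠ 0), mul_eq_one_comm.1 hX, hX, h2, mul_eq_one_comm.1 h2, ?_⟩
  have : Matrix.diagonal d * A * M * B = Matrix.diagonal d * (A * M * B) := by
    simp only [mul_assoc]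
  rw [this, h, Matrix.diagonal_mul_diagonal]
  ext i j
  rw [Matrix.sum_apply]
  by_cases hij : i = j
  · subst hij
    rw [Matrix.diagonal_apply_eq]
    simp only [Matrix.single_apply, and_self]
    rw [Finset.sum_ite_eq']
    simp only [d, Finset.mem_filter, Finset.mem_univ, true_and]
    split_ifs with h <;> simp_all
  · rw [Matrix.diagonal_apply_ne _ hij]
    symm
    apply Finset.sum_eq_zero
    intro k _
    rw [Matrix.single_apply, if_neg]
    rintro ⟨rfl, rfl⟩; exact hij rfl

theorem matrix_reg {n : ℕ} : VNRegular (Matrix (Fin n) (Fin n) K) := by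
  classical
  intro M
  obtain ⟨X, X', Y, Y', s, h1, h2, h3, h4, h⟩ := matrix_diag M
  have hE : (∑ i ∈ s, Matrix.single i i (1 : K)) * (∑ i ∈ s, Matrix.single i i (1 : K)) =
      ∑ i ∈ s, Matrix.single i i (1 : K) := by
    rw [Finset.sum_mul_sum]
    apply Finset.sum_congr rfl
    intro i hi
    rw [Finset.sum_eq_single i]
    · simp
    · intro j _ hj; rw [Matrix.single_mul_single_of_ne]; exact hj.symm
    · intro h; exact absurd hi h
  rw [← h] at hE
  refine ⟨Y * X, ?_⟩
  have h5 : X' * (X * M * Y) * Y' = M := by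
    simp only [mul_assoc, ra h1, one_mul, h3, mul_one]
  have h6 : X' * (X * M * Y * (X * M * Y)) * Y' = M * (Y * X) * M := by
    simp only [mul_assoc, ra h1, one_mul, h3, mul_one]
  rw [← h6, hE, h5]

theorem matricial_reg {A : Type*} [Ring A] [Algebra K A] (h : IsMatricialAlgebra K A) :
    VNRegular A := by
  obtain ⟨k, n, hn, ⟨φ⟩⟩ := h
  intro x
  choose y hy using fun i => matrix_reg (φ x i)
  refine ⟨φ.symm y, ?_⟩
  apply φ.injective
  rw [map_mul, map_mul, AlgEquiv.apply_symm_apply]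
  funext i
  exact hy i

theorem idem_factor {n : ℕ} (f : Matrix (Fin n) (Fin n) K) (hf : f * f = f) :
    ∃ (r : ℕ) (A : Matrix (Fin n) (Fin r) K) (B : Matrix (Fin r) (Fin n) K),
      A * B = f ∧ B * A = 1 := by
  classical
  let F : (Fin n → K) →ₗ[K] (Fin n → K) := Matrix.toLin' f
  have hF : ∀ x, F (F x) = F x := by
    intro x
    have : F ∘ₗ F = F := by rw [← Matrix.toLin'_mul, hf]
    exact LinearMap.congr_fun this x
  let b := Module.finBasis K (LinearMap.range F)
  refine ⟨_, LinearMap.toMatrix' ((LinearMap.range F).subtype ∘ₗ b.equivFun.symm.toLinearMap),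
    LinearMap.toMatrix' (b.equivFun.toLinearMap ∘ₗ F.rangeRestrict), ?_, ?_⟩
  · rw [← LinearMap.toMatrix'_comp]
    apply Matrix.toLin'.injective
    rw [Matrix.toLin'_toMatrix']
    ext x
    simp [F]
  · rw [← LinearMap.toMatrix'_comp, ← LinearMap.toMatrix'_id]
    congr 1
    apply LinearMap.ext
    intro x
    simp only [LinearMap.comp_apply, LinearMap.id_apply, LinearEquiv.coe_coe,
      Submodule.subtype_apply]
    have : F.rangeRestrict (b.equivFun.symm x : LinearMap.range F) = b.equivFun.symm x := by
      apply Subtype.ext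
      obtain ⟨y, hy⟩ := (b.equivFun.symm x).2
      show F _ = _
      rw [← hy, hF]
    rw [this, LinearEquiv.apply_symm_apply]

variable {Q : Type*} [Ring Q] [Algebra K Q] {N : Q → ℝ}

/-- Matrix-unit description of a corner of a matricial subalgebra. -/
theorem corner_units (D : Subalgebra K Q) (hD : IsMatricialAlgebra K D) (f : Q) (hfD : f ∈ D)
    (hf : f * f = f) :
    ∃ (T : ℕ) (r : Fin T → ℕ) (γ : Fin T → Q) (α β : (Σ t, Fin (r t)) → Q),
      (∀ t, γ t * γ t = γ t) ∧ (∀ x, β x * α x = γ x.1) ∧ (∀ x y, x ≠ y → β x * α y = 0) ∧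
      (∀ x, α x * γ x.1 = α x) ∧ (∀ x, γ x.1 * β x = β x) ∧ (∑ x, α x * β x = f) ∧
      (∀ d ∈ D, ∃ κ : (t : Fin T) → Fin (r t) → Fin (r t) → K,
        f * d * f = ∑ t, ∑ i, ∑ j, κ t i j • (α ⟨t, i⟩ * β ⟨t, j⟩)) := by
  classical
  obtain ⟨k, n, hn, ⟨φ⟩⟩ := hD
  let Φ : ((i : Fin (k + 1)) → Matrix (Fin (n i)) (Fin (n i)) K) →ₐ[K] Q :=
    D.val.comp φ.symm.toAlgHom
  have hΦ : ∀ d (hd : d ∈ D), Φ (φ ⟨d, hd⟩) = d := by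
    intro d hd; simp [Φ]
  set F := φ ⟨f, hfD⟩ with hF
  have hFF : F * F = F := by
    rw [hF, ← map_mul]; congr 1; exact Subtype.ext hf
  choose r A B hAB hBA using fun t => idem_factor (F t) (congrFun hFF t)
  let z : ∀ t, Fin (n t) := fun t => ⟨0, hn t⟩
  let α' : (Σ t, Fin (r t)) → ((i : Fin (k + 1)) → Matrix (Fin (n i)) (Fin (n i)) K) :=
    fun x => Pi.single x.1 (A x.1 * Matrix.single x.2 (z x.1) (1 : K))
  let β' : (Σ t, Fin (r t)) → ((i : Fin (k + 1)) → Matrix (Fin (n i)) (Fin (n i)) K) :=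
    fun x => Pi.single x.1 (Matrix.single (z x.1) x.2 (1 : K) * B x.1)
  let γ' : Fin (k + 1) → ((i : Fin (k + 1)) → Matrix (Fin (n i)) (Fin (n i)) K) :=
    fun t => Pi.single t (Matrix.single (z t) (z t) (1 : K))
  have hab : ∀ t i j, α' ⟨t, i⟩ * β' ⟨t, j⟩ = Pi.single t (A t * Matrix.single i j (1 : K) * B t) := by
    intro t i j
    simp only [α', β']
    rw [← Pi.single_mul]
    congr 1
    rw [Matrix.mul_assoc, ← Matrix.mul_assoc (Matrix.single i (z t) (1 : K)),
      Matrix.single_mul_single_same, ← Matrix.mul_assoc, mul_one]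
  have hba : ∀ t i j, β' ⟨t, i⟩ * α' ⟨t, j⟩ = if i = j then γ' t else 0 := by
    intro t i j
    simp only [α', β', γ']
    rw [← Pi.single_mul, Matrix.mul_assoc, ← Matrix.mul_assoc (B t), hBA, Matrix.one_mul]
    split_ifs with h
    · subst h; rw [Matrix.single_mul_single_same, mul_one]
    · rw [Matrix.single_mul_single_of_ne _ _ _ _ h, Pi.single_zero]
  refine ⟨k + 1, r, fun t => Φ (γ' t), fun x => Φ (α' x), fun x => Φ (β' x), ?_, ?_, ?_, ?_, ?_,
    ?_, ?_⟩
  · intro t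
    rw [← map_mul]
    simp only [γ']
    rw [← Pi.single_mul, Matrix.single_mul_single_same, mul_one]
  · rintro ⟨t, i⟩
    rw [← map_mul, hba, if_pos rfl]
  · rintro ⟨t, i⟩ ⟨t', j⟩ h
    rw [← map_mul]
    by_cases ht : t = t'
    · subst ht
      rw [hba, if_neg, map_zero]
      rintro rfl; exact h rfl
    · have : β' ⟨t, i⟩ * α' ⟨t', j⟩ = 0 := by
        simp only [α', β']
        funext s
        rw [Pi.mul_apply, Pi.zero_apply]
        by_cases hs : s = t
        · subst hs; rw [Pi.single_eq_of_ne ht]; simp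
        · rw [Pi.single_eq_of_ne hs]; simp
      rw [this, map_zero]
  · rintro ⟨t, i⟩
    rw [← map_mul]
    simp only [α', γ']
    rw [← Pi.single_mul, Matrix.mul_assoc, Matrix.single_mul_single_same, mul_one]
  · rintro ⟨t, i⟩
    rw [← map_mul]
    simp only [β', γ']
    rw [← Pi.single_mul, ← Matrix.mul_assoc, Matrix.single_mul_single_same, mul_one]
  · simp only [← map_mul]
    rw [← map_sum, Fintype.sum_sigma, ← hΦ f hfD, ← hF]
    congr 1
    rw [← Finset.univ_sum_single F]
    apply Finset.sum_congr rfl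
    intro t _
    simp only [hab]
    rw [← hAB t]
    have : (∑ i : Fin (r t), Matrix.single i i (1 : K)) = 1 := by
      ext a b
      rw [Matrix.sum_apply]
      simp only [Matrix.single_apply, Matrix.one_apply]
      by_cases h : a = b
      · subst h; simp
      · rw [if_neg h]; apply Finset.sum_eq_zero; intro i _; rw [if_neg]; rintro ⟨rfl, rfl⟩
        exact h rfl
    have h3 : (A t * B t) = ∑ i, (A t * (Matrix.single i i (1 : K) : Matrix (Fin (r t)) (Fin (r t)) K) : Matrix (Fin (n t)) (Fin (r t)) K) * B t := by
      rw [← Matrix.sum_mul, ← Matrix.mul_sum, this, Matrix.mul_one]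
    rw [h3]
    exact (map_sum (AddMonoidHom.single
      (fun i : Fin (k+1) => Matrix (Fin (n i)) (Fin (n i)) K) t) _ _).symm
  · intro d hd
    refine ⟨fun t i j => (B t * φ ⟨d, hd⟩ t * A t) i j, ?_⟩
    simp only [← map_mul, ← map_smul, ← map_sum]
    have h1 : f * d * f = Φ (F * φ ⟨d, hd⟩ * F) := by
      rw [map_mul, map_mul, hΦ d hd, hF, hΦ f hfD]
    rw [h1]
    congr 1
    rw [← Finset.univ_sum_single (F * φ ⟨d, hd⟩ * F)]
    apply Finset.sum_congr rfl
    intro t _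
    simp only [hab, ← Pi.single_smul]
    set M := B t * φ ⟨d, hd⟩ t * A t with hM
    have h2 : (F * φ ⟨d, hd⟩ * F) t = A t * M * B t := by
      rw [Pi.mul_apply, Pi.mul_apply, ← hAB t, hM]; simp only [Matrix.mul_assoc]
    rw [h2]
    have hs : ∀ (ι : Type) [Fintype ι] (g : ι → Matrix (Fin (n t)) (Fin (n t)) K),
        ∑ i, (Pi.single t (g i) : (i : Fin (k + 1)) → Matrix (Fin (n i)) (Fin (n i)) K) =
          Pi.single t (∑ i, g i) := by
      intro ι _ g
      exact (map_sum (AddMonoidHom.single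
            (fun i : Fin (k+1) => Matrix (Fin (n i)) (Fin (n i)) K) t) _ _).symm
    simp only [hs]
    congr 1
    conv_lhs => rw [Matrix.matrix_eq_sum_single M]
    simp only [Matrix.mul_sum, Matrix.sum_mul]
    apply Finset.sum_congr rfl; intro i _
    apply Finset.sum_congr rfl; intro j _
    have : Matrix.single i j (M i j) = M i j • Matrix.single i j (1 : K) := by
      rw [Matrix.smul_single, smul_eq_mul, mul_one]
    rw [this, Matrix.mul_smul, Matrix.smul_mul]

/-- The homomorphism given by a complete frame. -/
def frameHom (K : Type*) [Field K] {Q : Type*} [Ring Q] [Algebra K Q]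
    {ι : Type*} [Fintype ι] [DecidableEq ι] {π : Q} {u v : ι → Q}
    (h : IsFrame π 1 u v) (hs : ∑ i, u i * v i = 1) : Matrix ι ι K →ₐ[K] Q :=
  AlgHom.ofLinearMap
    { toFun := fun z => ∑ i, ∑ j, z i j • (u i * v j)
      map_add' := by
        intro x y
        simp only [Matrix.add_apply, add_smul, Finset.sum_add_distrib]
      map_smul' := by
        intro c x
        simp only [Matrix.smul_apply, Finset.smul_sum, smul_smul, smul_eq_mul, RingHom.id_apply] }
    (by
      simp only [LinearMap.coe_mk, AddHom.coe_mk]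
      rw [← hs]
      apply Finset.sum_congr rfl
      intro i _
      rw [Finset.sum_eq_single i]
      · simp
      · intro j _ hj; simp [Matrix.one_apply_ne hj.symm]
      · simp)
    (by
      intro a b
      simp only [LinearMap.coe_mk, AddHom.coe_mk]
      have hv : ∀ k, v k * (∑ i, ∑ j, b i j • (u i * v j)) = ∑ j, b k j • v j := by
        intro k
        rw [Finset.mul_sum, Finset.sum_eq_single k]
        · rw [Finset.mul_sum]
          apply Finset.sum_congr rfl
          intro j _
          rw [mul_smul_comm, ra (h.same k), h.πv]
        · intro i _ hi
          rw [Finset.mul_sum]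
          apply Finset.sum_eq_zero
          intro j _
          rw [mul_smul_comm, ra (h.ne k i hi.symm), zero_mul, smul_zero]
        · simp
      rw [Finset.sum_mul]
      apply Finset.sum_congr rfl
      intro i _
      rw [Finset.sum_mul]
      simp only [smul_mul_assoc, mul_assoc, hv]
      simp only [Matrix.mul_apply, Finset.mul_sum, Finset.smul_sum, Finset.sum_smul, mul_smul_comm,
        smul_smul]
      exact Finset.sum_comm)

theorem frameHom_apply {ι : Type*} [Fintype ι] [DecidableEq ι] {π : Q} {u v : ι → Q}
    (h : IsFrame π 1 u v) (hs : ∑ i, u i * v i = 1) (z : Matrix ι ι K) :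
    frameHom K h hs z = ∑ i, ∑ j, z i j • (u i * v j) := rfl

theorem rank_unit (hP : IsPseudoRankFunction N) {n : ℕ} (φ : Matrix (Fin n) (Fin n) K →ₐ[K] Q)
    (i : Fin n) : N (φ (Matrix.single i i 1)) = 1 / n := by
  classical
  have hle : ∀ i j, N (φ (Matrix.single i i 1)) ≤ N (φ (Matrix.single j j 1)) := by
    intro i j
    have : (Matrix.single i i (1 : K)) =
        Matrix.single i j 1 * Matrix.single j j 1 * Matrix.single j i 1 := by simp
    rw [this, map_mul, map_mul]
    exact pr_mul3 hP _ _ _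
  have h1 := (pr_sum_orth hP Finset.univ (fun i => φ (Matrix.single i i 1))
    (fun i => by rw [← map_mul]; simp)
    (fun i j hij => by rw [← map_mul, Matrix.single_mul_single_of_ne _ _ _ _ hij, map_zero])).1
  have h2 : (∑ i : Fin n, Matrix.single i i (1 : K)) = 1 := by
    ext a b
    rw [Matrix.sum_apply]
    simp only [Matrix.single_apply, Matrix.one_apply]
    by_cases h : a = b
    · subst h; simp
    · rw [if_neg h]; apply Finset.sum_eq_zero; intro i _; rw [if_neg]; rintro ⟨rfl, rfl⟩
      exact h rfl
  rw [← map_sum, h2, map_one, hP.map_one,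
    Finset.sum_congr rfl fun j _ => le_antisymm (hle j i) (hle i j)] at h1
  simp at h1
  have : (n : ℝ) ≠ 0 := by have := i.pos; positivity
  field_simp
  linarith

theorem rank_matrix_unique {N' : Q → ℝ} (hP : IsPseudoRankFunction N)
    (hP' : IsPseudoRankFunction N') {n : ℕ} (φ : Matrix (Fin n) (Fin n) K →ₐ[K] Q)
    (M : Matrix (Fin n) (Fin n) K) : N (φ M) = N' (φ M) := by
  classical
  obtain ⟨X, X', Y, Y', s, h1, h2, h3, h4, h⟩ := matrix_diag M
  have h5 : X' * (X * M * Y) * Y' = M := by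
    simp only [mul_assoc, ra h1, one_mul, h3, mul_one]
  have key : ∀ N : Q → ℝ, IsPseudoRankFunction N → N (φ M) = ∑ i ∈ s, (1 / n : ℝ) := by
    intro N hP
    have e1 : N (φ M) = N (φ (X * M * Y)) := by
      apply le_antisymm
      · conv_lhs => rw [← h5, map_mul, map_mul]
        exact pr_mul3 hP _ _ _
      · rw [map_mul, map_mul]; exact pr_mul3 hP _ _ _
    rw [e1, h, map_sum, (pr_sum_orth hP s (fun i => φ (Matrix.single i i 1))
      (fun i => by rw [← map_mul]; simp)
      (fun i j hij => by rw [← map_mul, Matrix.single_mul_single_of_ne _ _ _ _ hij, map_zero])).1]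
    exact Finset.sum_congr rfl fun i _ => rank_unit hP φ i
  rw [key N hP, key N' hP']

theorem matricial_range [Nontrivial Q] {A : Type*} [Ring A] [Algebra K A]
    (hA : IsMatricialAlgebra K A) (φ₀ : A →ₐ[K] Q) : IsMatricialAlgebra K φ₀.range := by
  classical
  obtain ⟨k, n, hn, ⟨θ⟩⟩ := hA
  haveI : ∀ i, Nonempty (Fin (n i)) := fun i => ⟨⟨0, hn i⟩⟩
  let P := (i : Fin (k + 1)) → Matrix (Fin (n i)) (Fin (n i)) K
  let φ : P →ₐ[K] Q := φ₀.comp θ.symm.toAlgHom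
  have hrange : φ.range = φ₀.range := by
    ext q
    constructor
    · rintro ⟨z, rfl⟩; exact ⟨θ.symm z, rfl⟩
    · rintro ⟨z, rfl⟩; exact ⟨θ z, by simp [φ]⟩
  rw [← hrange]
  let T := {t : Fin (k + 1) // φ (Pi.single t 1) ≠ 0}
  have hzero : ∀ t, φ (Pi.single t 1) = 0 → ∀ m, φ (Pi.single t m) = 0 := by
    intro t ht m
    have : (Pi.single t m : P) = Pi.single t m * Pi.single t 1 := by
      rw [← Pi.single_mul, mul_one]
    rw [this, map_mul, ht, mul_zero]
  let extF : ((t : T) → Matrix (Fin (n t.1)) (Fin (n t.1)) K) → P :=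
    fun z t => if h : φ (Pi.single t 1) ≠ 0 then z ⟨t, h⟩ else 0
  have extF_apply : ∀ z t, extF z t = if h : φ (Pi.single t 1) ≠ 0 then z ⟨t, h⟩ else 0 :=
    fun _ _ => rfl
  let ext : ((t : T) → Matrix (Fin (n t.1)) (Fin (n t.1)) K) →ₗ[K] P :=
    { toFun := extF
      map_add' := by
        intro x y; funext t
        change extF (x + y) t = extF x t + extF y t
        rw [extF_apply, extF_apply, extF_apply]
        by_cases h : φ (Pi.single t 1) ≠ 0
        · rw [dif_pos h, dif_pos h, dif_pos h]; rfl
        · rw [dif_neg h, dif_neg h, dif_neg h, add_zero]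
      map_smul' := by
        intro c x; funext t
        change extF (c • x) t = c • extF x t
        rw [extF_apply, extF_apply]
        by_cases h : φ (Pi.single t 1) ≠ 0
        · rw [dif_pos h, dif_pos h]; rfl
        · rw [dif_neg h, dif_neg h, smul_zero] }
  have ext_apply : ∀ z t, ext z t = if h : φ (Pi.single t 1) ≠ 0 then z ⟨t, h⟩ else 0 :=
    fun _ _ => rfl
  have hres : ∀ p : P, φ (ext (fun t => p t.1)) = φ p := by
    intro p
    have : φ (p - ext (fun t => p t.1)) = 0 := by
      rw [← Finset.univ_sum_single (p - ext (fun t => p t.1)), map_sum]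
      apply Finset.sum_eq_zero
      intro t _
      by_cases h : φ (Pi.single t 1) ≠ 0
      · have : (p - ext (fun t => p t.1)) t = 0 := by
          rw [Pi.sub_apply, ext_apply, dif_pos h, sub_self]
        rw [this, Pi.single_zero, map_zero]
      · exact hzero t (not_not.1 h) _
    rw [map_sub, sub_eq_zero] at this
    exact this.symm
  let ψ : ((t : T) → Matrix (Fin (n t.1)) (Fin (n t.1)) K) →ₐ[K] Q :=
    AlgHom.ofLinearMap (φ.toLinearMap ∘ₗ ext)
      (by
        have := hres 1
        rw [map_one] at this
        exact this)
      (by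
        intro x y
        have : ext (x * y) = ext x * ext y := by
          funext t
          rw [Pi.mul_apply, ext_apply, ext_apply, ext_apply]
          by_cases h : φ (Pi.single t 1) ≠ 0 <;> simp [h]
        simp only [LinearMap.comp_apply, this]
        exact map_mul φ _ _)
  have hψ : ∀ z, ψ z = φ (ext z) := fun _ => rfl
  have hinj : Function.Injective ψ := by
    rw [injective_iff_map_eq_zero]
    intro z hz
    by_contra hne
    have : ∃ t, z t ≠ 0 := by
      by_contra! h; exact hne (funext h)
    obtain ⟨t, ht⟩ := this
    let J : TwoSidedIdeal (Matrix (Fin (n t.1)) (Fin (n t.1)) K) :=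
      TwoSidedIdeal.mk' {m | φ (Pi.single t.1 m) = 0}
        (by simp)
        (by intro a b ha hb
            simp only [Set.mem_ofPred_eq] at *
            rw [Pi.single_add, map_add, ha, hb, add_zero])
        (by intro a ha
            simp only [Set.mem_ofPred_eq] at *
            rw [Pi.single_neg, map_neg, ha, neg_zero])
        (by intro a b hb
            simp only [Set.mem_ofPred_eq] at *
            rw [Pi.single_mul, map_mul, hb, mul_zero])
        (by intro a b hb
            simp only [Set.mem_ofPred_eq] at *
            rw [Pi.single_mul, map_mul, hb, zero_mul])
    have hJ : ∀ m, m ∈ J ↔ φ (Pi.single t.1 m) = 0 := fun m => by simp [J]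
    rcases IsSimpleOrder.eq_bot_or_eq_top J with h' | h'
    · have : z t ∈ J := by
        rw [hJ]
        have h1 : (Pi.single t.1 (z t) : P) = ext z * Pi.single t.1 1 := by
          funext s
          rw [Pi.mul_apply]
          by_cases hs : s = t.1
          · subst hs; rw [Pi.single_eq_same, Pi.single_eq_same, ext_apply, dif_pos t.2, mul_one]
          · rw [Pi.single_eq_of_ne hs, Pi.single_eq_of_ne hs, mul_zero]
        rw [h1, map_mul, ← hψ, hz, zero_mul]
      rw [h', TwoSidedIdeal.mem_bot] at this
      exact ht this
    · have : (1 : Matrix (Fin (n t.1)) (Fin (n t.1)) K) ∈ J := by rw [h']; trivial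
      exact t.2 ((hJ 1).1 this)
  have hψr : ψ.range = φ.range := by
    ext q
    constructor
    · rintro ⟨z, rfl⟩; exact ⟨ext z, rfl⟩
    · rintro ⟨p, rfl⟩; exact ⟨fun t => p t.1, hres p⟩
  have hT : Nonempty T := by
    by_contra h
    have h1 : ∀ t, φ (Pi.single t 1) = 0 := by
      intro t; by_contra h'; exact h ⟨⟨t, h'⟩⟩
    have h2 : φ 1 = 0 := by
      rw [← Finset.univ_sum_single (1 : P), map_sum]
      exact Finset.sum_eq_zero fun t _ => h1 t
    rw [map_one] at h2
    exact one_ne_zero h2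
  obtain ⟨k', hk'⟩ : ∃ k', Fintype.card T = k' + 1 :=
    Nat.exists_eq_succ_of_ne_zero (Fintype.card_ne_zero)
  let e : T ≃ Fin (k' + 1) := Fintype.equivFinOfCardEq hk'
  refine ⟨k', fun j => n (e.symm j).1, fun j => hn _, ⟨?_⟩⟩
  rw [← hψr]
  exact (AlgEquiv.ofInjective ψ hinj).symm.trans
    (AlgEquiv.piCongrLeft' K (fun t : T => Matrix (Fin (n t.1)) (Fin (n t.1)) K) e)

end Matrices

section Corner

variable {K : Type*} [Field K] {Q : Type*} [Ring Q] [Algebra K Q] {N : Q → ℝ}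

theorem idem_near (hP : IsPseudoRankFunction N) (D : Subalgebra K Q) (hD : VNRegular D)
    {e e' : Q} (he : e * e = e) (he' : e' ∈ D) {δ : ℝ} (hd : N (e - e') ≤ δ) :
    ∃ f ∈ D, f * f = f ∧ N (e - f) ≤ 4 * δ := by
  have hzD : e' * e' - e' ∈ D := D.sub_mem (D.mul_mem he' he') he'
  obtain ⟨⟨y, hyD⟩, hy⟩ := hD ⟨e' * e' - e', hzD⟩
  replace hy : e' * e' - e' = (e' * e' - e') * y * (e' * e' - e') := congrArg Subtype.val hy
  have hz : N (e' * e' - e') ≤ 3 * δ := by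
    have h0 : e' * e' - e' = (e' - e) * e' + e * (e' - e) + (e - e') := by
      simp only [sub_mul, mul_sub, he]; abel
    rw [h0]
    have h1 := hP.subadditive ((e' - e) * e' + e * (e' - e)) (e - e')
    have h2 := hP.subadditive ((e' - e) * e') (e * (e' - e))
    have h3 := hP.mul_le_left (e' - e) e'
    have h4 := hP.mul_le_right e (e' - e)
    rw [pr_sub_comm hP e' e] at h3 h4
    linarith
  set z := e' * e' - e' with hzdef
  have hzq : z * (1 - y * z) = 0 := by
    rw [mul_sub, mul_one, ← mul_assoc, ← hy, sub_self]
  have hqD : 1 - y * z ∈ D := D.sub_mem D.one_mem (D.mul_mem hyD hzD)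
  set q := 1 - y * z with hq
  have hg : e' * (e' * q) = e' * q := by
    have : z * q = e' * (e' * q) - e' * q := by rw [hzdef, sub_mul, mul_assoc]
    rw [hzq] at this
    exact (sub_eq_zero.1 this.symm)
  have hgD : e' * q ∈ D := D.mul_mem he' hqD
  obtain ⟨⟨w, hwD⟩, hw⟩ := hD ⟨e' * q, hgD⟩
  replace hw : e' * q = (e' * q) * w * (e' * q) := congrArg Subtype.val hw
  set g := e' * q with hgdef
  refine ⟨g * w * e', D.mul_mem (D.mul_mem hgD hwD) he', ?_, ?_⟩
  · calc g * w * e' * (g * w * e') = g * w * (e' * g) * w * e' := by simp only [mul_assoc]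
      _ = g * w * e' := by rw [hg, ← hw]
  · have h1 : (g * w * e' - e') * q = 0 := by
      rw [sub_mul, mul_assoc _ e' q, ← hgdef, ← hw, sub_self]
    have h2 : g * w * e' - e' = (g * w * e' - e') * y * z := by
      have : (g * w * e' - e') * q = (g * w * e' - e') - (g * w * e' - e') * y * z := by
        rw [hq, mul_sub, mul_one, ← mul_assoc _ y z]
      rw [h1] at this
      exact sub_eq_zero.1 this.symm
    have h3 : N (g * w * e' - e') ≤ 3 * δ := by
      rw [h2]; exact (hP.mul_le_right _ _).trans hz
    have h4 := pr_tri hP e e' (g * w * e')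
    rw [pr_sub_comm hP e'] at h4
    linarith

theorem move_idem (hP : IsPseudoRankFunction N) (hreg : VNRegular Q) (hc : Cmp N)
    {e f : Q} (he : e * e = e) (hf : f * f = f) {η : ℝ} (hd : N (e - f) ≤ η) (hle : N f ≤ N e) :
    ∃ s s' : Q, s' * s = f ∧ e * s = s ∧ s * f = s ∧ s' * e = s' ∧ f * s' = s' ∧
      N (e - s) ≤ 3 * η ∧ N (e - s') ≤ 4 * η := by
  obtain ⟨y0, hy0⟩ := hreg (e * f)
  set a := e * f with ha
  have ea : e * a = a := by rw [ha, ra he]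
  have af : a * f = a := by rw [ha, mul_assoc, hf]
  have h1 : a * (f * y0 * e) * a = a := by
    calc a * (f * y0 * e) * a = (a * f) * y0 * (e * a) := by simp only [mul_assoc]
      _ = a := by rw [af, ea, ← hy0]
  set y1 := f * y0 * e with hy1
  have fy1 : f * y1 = y1 := by rw [hy1, ← mul_assoc, ← mul_assoc, hf]
  have y1e : y1 * e = y1 := by rw [hy1, mul_assoc, he]
  set y := y1 * a * y1 with hy
  have fy : f * y = y := by rw [hy, ← mul_assoc f, ← mul_assoc f, fy1]
  have ye : y * e = y := by rw [hy, mul_assoc, y1e]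
  have aya : a * y * a = a := by
    calc a * y * a = (a * y1 * a) * y1 * a := by simp only [hy, mul_assoc]
      _ = a := by rw [h1, h1]
  have yay : y * a * y = y := by
    calc y * a * y = y1 * (a * y1 * a) * y1 * a * y1 := by simp only [hy, mul_assoc]
      _ = y1 * (a * y1 * a) * y1 := by rw [h1, mul_assoc y1 a y1, mul_assoc y1, mul_assoc y1, h1]
      _ = y := by rw [h1]
  have qq : y * a * (y * a) = y * a := by rw [← mul_assoc, yay]
  have q'q' : a * y * (a * y) = a * y := by rw [← mul_assoc, aya]
  have fq : f * (y * a) = y * a := by rw [ra fy]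
  have qf : y * a * f = y * a := by rw [mul_assoc, af]
  have eq' : e * (a * y) = a * y := by rw [ra ea]
  have q'e : a * y * e = a * y := by rw [mul_assoc, ye]
  have hη : N (f - y * a) ≤ η := by
    have h2 : e * (f - y * a) = 0 := by
      have : e * (y * a) = a * (y * a) := by
        rw [ha, mul_assoc e f, ← mul_assoc f, fy]
      rw [mul_sub, this, ← ha, ← mul_assoc, aya, sub_self]
    have h3 : f - y * a = (f - e) * (f - y * a) := by
      rw [sub_mul, h2, sub_zero, mul_sub, hf, fq]
    rw [h3]
    refine (hP.mul_le_left _ _).trans ?_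
    rw [pr_sub_comm hP]; exact hd
  have hrk : N (a * y) = N (y * a) := emb_rank hP rfl (by rw [← mul_assoc, aya]) qq
  have hcmp : N (f - y * a) ≤ N (e - a * y) := by
    rw [pr_idem_sub hP hf qq fq qf, pr_idem_sub hP he q'q' eq' q'e]; linarith
  obtain ⟨u, v, h1', h2', h3', h4', h5'⟩ := hc _ _ (idem_sub hf qq fq qf)
    (idem_sub he q'q' eq' q'e) hcmp
  have hyz : y * (e - a * y) = 0 := by rw [mul_sub, ye, ← mul_assoc, yay, sub_self]
  have hza : (e - a * y) * a = 0 := by rw [sub_mul, ea, aya, sub_self]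
  have yu : y * u = 0 := by rw [← h2', ra hyz, zero_mul]
  have va : v * a = 0 := by rw [← h4', mul_assoc, hza, mul_zero]
  have eu : e * u = u := by
    rw [← h2', ← mul_assoc, mul_sub, he, eq']
  have ve : v * e = v := by
    rw [← h4', mul_assoc, sub_mul, he, q'e]
  have uf : u * f = u := by
    rw [← h3', mul_assoc, sub_mul, hf, qf]
  have fv : f * v = v := by
    rw [← h5', ← mul_assoc, mul_sub, hf, fq]
  have hss : (y + v) * (a + u) = f := by
    rw [add_mul, mul_add, mul_add, yu, va, h1']; abel
  have hs's : N (f - (a + u)) ≤ 2 * η := by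
    have h6 : f - (a + u) = (f - e) * f - u * (f - y * a) := by
      rw [h3', sub_mul, hf, ← ha]; abel
    have h7 := pr_tri hP ((f - e) * f) 0 (u * (f - y * a))
    rw [h6]
    rw [sub_zero, zero_sub, pr_neg hP] at h7
    have h8 := hP.mul_le_left (f - e) f
    rw [pr_sub_comm hP f] at h8
    have h9 := hP.mul_le_right u (f - y * a)
    linarith
  refine ⟨a + u, y + v, hss, by rw [mul_add, ea, eu], by rw [add_mul, af, uf],
    by rw [add_mul, ye, ve], by rw [mul_add, fy, fv], ?_, ?_⟩
  · have := pr_tri hP e f (a + u)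
    linarith
  · have h6 : (y + v) * e = y + v := by rw [add_mul, ye, ve]
    have h7 : (y + v) * (f - (a + u)) = (y + v) * f - f := by rw [mul_sub, hss]
    have h8 : N (f - (y + v) * f) ≤ 2 * η := by
      rw [pr_sub_comm hP, ← h7]; exact (hP.mul_le_right _ _).trans hs's
    have h9 : N ((y + v) * f - (y + v)) ≤ η := by
      have : (y + v) * f - (y + v) = (y + v) * (f - e) := by rw [mul_sub, h6]
      rw [this]
      refine (hP.mul_le_right _ _).trans ?_
      rw [pr_sub_comm hP]; exact hd
    have h10 := pr_tri hP f ((y + v) * f) (y + v)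
    have h11 := pr_tri hP e f (y + v)
    linarith

theorem numerics {T : ℕ} (r : Fin T → ℕ) (ρ : Fin T → ℝ) (hρ : ∀ t, 0 ≤ ρ t) (n : ℕ) {δ : ℝ}
    (hδ : 0 < δ) (hF : ∑ t, r t * ρ t ≤ 1 / 2 ^ n + 4 * δ) :
    ∃ (k : ℕ) (a : Fin T → ℕ), 1 ≤ k ∧ (∀ t, a t * (1 / 2 ^ (n + k) : ℝ) ≤ ρ t) ∧
      ∑ t, r t * a t ≤ 2 ^ k ∧
      ∑ t, r t * ρ t - (∑ t, r t * a t : ℕ) * (1 / 2 ^ (n + k) : ℝ) ≤ 5 * δ := by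
  set w : ℝ := 1 / 2 ^ n with hw
  have hw0 : 0 < w := by positivity
  obtain ⟨k, hk⟩ := pow_unbounded_of_one_lt ((∑ t, (r t : ℝ)) / δ + 1) (one_lt_two (α := ℝ))
  have hR0 : 0 ≤ ∑ t, (r t : ℝ) := Finset.sum_nonneg fun _ _ => Nat.cast_nonneg _
  have hk1 : 1 ≤ k := by
    rcases Nat.eq_zero_or_pos k with h | h
    · rw [h, pow_zero] at hk
      have : 0 ≤ (∑ t, (r t : ℝ)) / δ := by positivity
      linarith
    · exact h
  set P : ℝ := 2 ^ (n + k) with hP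
  have hP0 : 0 < P := by positivity
  have hwP : w * P = 2 ^ k := by
    rw [hw, hP, pow_add]; field_simp
  have hRP : (∑ t, (r t : ℝ)) * (1 / P) ≤ δ := by
    have h1 : (2 : ℝ) ^ k ≤ P := pow_le_pow_right₀ (by norm_num) (by omega)
    have h2 : (∑ t, (r t : ℝ)) / δ ≤ P := by linarith
    rw [div_le_iff₀ hδ] at h2
    rw [mul_one_div, div_le_iff₀ hP0]
    linarith
  set l : ℝ := w / (w + 4 * δ) with hl
  have hl0 : 0 < l := by positivity
  have hl1 : l ≤ 1 := by rw [hl, div_le_one (by positivity)]; linarith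
  have hnn : ∀ t, 0 ≤ l * ρ t * P := fun t => mul_nonneg (mul_nonneg hl0.le (hρ t)) hP0.le
  have hle : ∀ t, (⌊l * ρ t * P⌋₊ : ℝ) * (1 / P) ≤ l * ρ t := by
    intro t
    rw [mul_one_div, div_le_iff₀ hP0]
    exact Nat.floor_le (hnn t)
  have hge : ∀ t, l * ρ t - 1 / P ≤ (⌊l * ρ t * P⌋₊ : ℝ) * (1 / P) := by
    intro t
    have := (Nat.lt_floor_add_one (l * ρ t * P)).le
    rw [mul_one_div, le_div_iff₀ hP0, sub_mul, one_div_mul_cancel hP0.ne']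
    linarith
  set F := ∑ t, r t * ρ t with hFd
  have hF0 : 0 ≤ F := Finset.sum_nonneg fun t _ => mul_nonneg (Nat.cast_nonneg _) (hρ t)
  have hlF : l * F ≤ w := by
    calc l * F ≤ l * (w + 4 * δ) := mul_le_mul_of_nonneg_left hF hl0.le
      _ = w := by rw [hl]; field_simp
  have hlF' : F - l * F ≤ 4 * δ := by
    have : F - l * F = (1 - l) * F := by ring
    rw [this]
    calc (1 - l) * F ≤ (1 - l) * (w + 4 * δ) := mul_le_mul_of_nonneg_left hF (by linarith)
      _ = 4 * δ := by rw [hl]; field_simp; ring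
  have hsum : ((∑ t, r t * ⌊l * ρ t * P⌋₊ : ℕ) : ℝ) * (1 / P) =
      ∑ t, (r t : ℝ) * (⌊l * ρ t * P⌋₊ * (1 / P)) := by
    push_cast; rw [Finset.sum_mul]; simp only [mul_assoc]
  refine ⟨k, fun t => ⌊l * ρ t * P⌋₊, hk1, ?_, ?_, ?_⟩
  · intro t
    refine (hle t).trans ?_
    have := mul_le_mul_of_nonneg_right hl1 (hρ t)
    linarith
  · have h1 : ((∑ t, r t * ⌊l * ρ t * P⌋₊ : ℕ) : ℝ) * (1 / P) ≤ w := by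
      rw [hsum]
      refine le_trans ?_ hlF
      rw [hFd, Finset.mul_sum]
      apply Finset.sum_le_sum
      intro t _
      have := mul_le_mul_of_nonneg_left (hle t) (Nat.cast_nonneg (r t) (α := ℝ))
      linarith
    rw [mul_one_div, div_le_iff₀ hP0, hwP] at h1
    exact_mod_cast h1
  · rw [hsum]
    have h1 : l * F - (∑ t, (r t : ℝ)) * (1 / P) ≤
        ∑ t, (r t : ℝ) * (⌊l * ρ t * P⌋₊ * (1 / P)) := by
      rw [hFd, Finset.mul_sum, Finset.sum_mul, ← Finset.sum_sub_distrib]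
      apply Finset.sum_le_sum
      intro t _
      have := mul_le_mul_of_nonneg_left (hge t) (Nat.cast_nonneg (r t) (α := ℝ))
      linarith
    linarith

theorem frame_extend (hN : IsRankFunction N) (hc : Cmp N) {ι : Type*} [Fintype ι] {π e : Q}
    {p q : ι → Q} (h : IsFrame π e p q) (hπ : π * π = π) (he : e * e = e) (m : ℕ)
    (hm : m * N π = N e) (hle : Fintype.card ι ≤ m) :
    ∃ u v : Fin m → Q, IsFrame π e u v ∧ ∑ i, u i * v i = e ∧
      ∃ g : ι → Fin m, ∀ i, u (g i) = p i ∧ v (g i) = q i := by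
  classical
  have hP := hN.1
  set f := ∑ i, p i * q i with hf
  have ff : f * f = f := h.sum_idem
  have ef : e * f = f := h.e_sum
  have fe : f * e = f := h.sum_e
  have hr : ((m - Fintype.card ι : ℕ) : ℝ) * N π ≤ N (e - f) := by
    rw [pr_idem_sub hP he ff ef fe, hf, h.rank hP hπ, ← hm, Nat.cast_sub hle, sub_mul]
  obtain ⟨u', v', h'⟩ := frame_exists hP hc hπ (idem_sub he ff ef fe) _ hr
  have fu : ∀ i, f * u' i = 0 := by
    intro i; rw [← h'.eu i, ← mul_assoc, mul_sub, fe, ff, sub_self, zero_mul]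
  have vf : ∀ i, v' i * f = 0 := by
    intro i; rw [← h'.ve i, mul_assoc, sub_mul, ef, ff, sub_self, mul_zero]
  have hcard : Fintype.card (ι ⊕ Fin (m - Fintype.card ι)) = m := by
    rw [Fintype.card_sum, Fintype.card_fin]; omega
  let E : (ι ⊕ Fin (m - Fintype.card ι)) ≃ Fin m := Fintype.equivFinOfCardEq hcard
  have hfr : IsFrame π e (Sum.elim p u') (Sum.elim q v') := by
    refine ⟨?_, ?_, ?_, ?_, ?_, ?_⟩
    · rintro (i | i)
      · exact h.same i
      · exact h'.same i
    · rintro (i | i) (j | j) hij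
      · exact h.ne i j fun h => hij (by rw [h])
      · show q i * u' j = 0
        rw [← h.v_mul_sum i, mul_assoc, ← hf, fu, mul_zero]
      · show v' i * p j = 0
        rw [← h.sum_mul_u j, ← mul_assoc, ← hf, vf, zero_mul]
      · exact h'.ne i j fun h => hij (by rw [h])
    · rintro (i | i)
      · exact h.uπ i
      · exact h'.uπ i
    · rintro (i | i)
      · exact h.πv i
      · exact h'.πv i
    · rintro (i | i)
      · exact h.eu i
      · show e * u' i = u' i
        rw [← h'.eu i, ← mul_assoc, mul_sub, he, ef]
    · rintro (i | i)
      · exact h.ve i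
      · show v' i * e = v' i
        rw [← h'.ve i, mul_assoc, sub_mul, he, fe]
  have hfr' : IsFrame π e (Sum.elim p u' ∘ E.symm) (Sum.elim q v' ∘ E.symm) :=
    ⟨fun i => hfr.same _, fun i j hij => hfr.ne _ _ fun h => hij (E.symm.injective h),
      fun i => hfr.uπ _, fun i => hfr.πv _, fun i => hfr.eu _, fun i => hfr.ve _⟩
  refine ⟨_, _, hfr', frame_full hN hfr' hπ he (by rw [Fintype.card_fin, hm]),
    fun i => E (Sum.inl i), fun i => ?_⟩
  simp

/-- Approximation inside a corner by a full matrix algebra of size a power of two. -/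
theorem corner_approx (hN : IsRankFunction N) (hreg : VNRegular Q) (hc : Cmp N) (hon : Onto N)
    (h3 : ∀ ε : ℝ, 0 < ε → ∀ (n : ℕ) (x : Fin n → Q),
          ∃ A : Subalgebra K Q, IsMatricialAlgebra K A ∧
            ∃ y : Fin n → Q, (∀ i, y i ∈ A) ∧ ∀ i, N (x i - y i) < ε)
    {e : Q} (he : e * e = e) {n : ℕ} (hne : N e = 1 / 2 ^ n) {m : ℕ} (x : Fin m → Q)
    (hx : ∀ i, e * x i * e = x i) {ε : ℝ} (hε : 0 < ε) :
    ∃ (k : ℕ) (π : Q) (u v : Fin (2 ^ k) → Q), 1 ≤ k ∧ IsFrame π e u v ∧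
      ∑ i, u i * v i = e ∧ ∀ i, ∃ z : Q, N (x i - z) < ε ∧
        z ∈ Submodule.span K (Set.range fun c : Fin (2 ^ k) × Fin (2 ^ k) => u c.1 * v c.2) := by
  classical
  have hP := hN.1
  set δ : ℝ := ε / 65 with hδd
  have hδ : 0 < δ := by positivity
  obtain ⟨D, hD, y, hyD, hy⟩ := h3 δ hδ (m + 1) (Fin.cons e x)
  have hy0 := hy 0
  simp only [Fin.cons_zero] at hy0
  obtain ⟨f, hfD, ff, hef⟩ := idem_near hP D (matricial_reg hD) he (hyD 0) hy0.le
  obtain ⟨T, r, γ, α, β, hγ, hs, hn, hαγ, hγβ, hsum, hspan⟩ := corner_units D hD f hfD ff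
  have hrank : N f = ∑ t, r t * N (γ t) := by
    rw [← hsum, (pr_sum_orth hP Finset.univ (fun x => α x * β x) ?_ ?_).1, Fintype.sum_sigma]
    · apply Finset.sum_congr rfl
      intro t _
      rw [Finset.sum_congr rfl fun i _ => emb_rank hP (hs ⟨t, i⟩) (hαγ ⟨t, i⟩) (hγ t)]
      simp
    · intro i; rw [mul_assoc, ra (hs i), hγβ]
    · intro i j hij; rw [mul_assoc, ra (hn i j hij), zero_mul, mul_zero]
  have hfe : N f ≤ 1 / 2 ^ n + 4 * δ := by
    have h1 := hP.subadditive e (f - e)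
    rw [add_sub_cancel, pr_sub_comm hP f] at h1
    linarith
  obtain ⟨k, a, hk1, ha, hale, haloss⟩ := numerics r (fun t => N (γ t)) (fun t => hP.nonneg _) n hδ
    (by rw [← hrank]; exact hfe)
  rw [← hrank] at haloss
  obtain ⟨π, hπ, hπr⟩ := hon (1 / 2 ^ (n + k)) (by positivity) (by
    rw [div_le_one (by positivity)]; exact one_le_pow₀ (by norm_num))
  have hUV : ∀ t, ∃ u v : Fin (a t) → Q, IsFrame π (γ t) u v := fun t =>
    frame_exists hP hc hπ (hγ t) (a t) (by rw [hπr]; exact ha t)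
  choose U V hUV using hUV
  have hαf : ∀ x, f * α x = α x := by
    intro x
    rw [← hsum, Finset.sum_mul, Finset.sum_eq_single x]
    · rw [mul_assoc, hs, hαγ]
    · intro b _ hb; rw [mul_assoc, hn b x hb, mul_zero]
    · simp
  have hβf : ∀ x, β x * f = β x := by
    intro x
    rw [← hsum, Finset.mul_sum, Finset.sum_eq_single x]
    · rw [← mul_assoc, hs, hγβ]
    · intro b _ hb; rw [← mul_assoc, hn x b hb.symm, zero_mul]
    · simp
  let p : (Σ x : (Σ t, Fin (r t)), Fin (a x.1)) → Q := fun j => α j.1 * U j.1.1 j.2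
  let q : (Σ x : (Σ t, Fin (r t)), Fin (a x.1)) → Q := fun j => V j.1.1 j.2 * β j.1
  have hpq : IsFrame π f p q := by
    refine ⟨?_, ?_, ?_, ?_, ?_, ?_⟩
    · rintro ⟨x, c⟩
      show V x.1 c * β x * (α x * U x.1 c) = π
      rw [mul_assoc, ra (hs x), (hUV x.1).eu, (hUV x.1).same]
    · rintro ⟨x, c⟩ ⟨x', c'⟩ h
      show V x.1 c * β x * (α x' * U x'.1 c') = 0
      by_cases hx : x = x'
      · subst hx
        rw [mul_assoc, ra (hs x), (hUV x.1).eu, (hUV x.1).ne]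
        rintro rfl; exact h rfl
      · rw [mul_assoc, ra (hn x x' hx), zero_mul, mul_zero]
    · rintro ⟨x, c⟩
      show α x * U x.1 c * π = α x * U x.1 c
      rw [mul_assoc, (hUV x.1).uπ]
    · rintro ⟨x, c⟩
      show π * (V x.1 c * β x) = V x.1 c * β x
      rw [ra ((hUV x.1).πv c)]
    · rintro ⟨x, c⟩
      show f * (α x * U x.1 c) = α x * U x.1 c
      rw [ra (hαf x)]
    · rintro ⟨x, c⟩
      show V x.1 c * β x * f = V x.1 c * β x
      rw [mul_assoc, hβf]
  have hcard : Fintype.card (Σ x : (Σ t, Fin (r t)), Fin (a x.1)) = ∑ t, r t * a t := by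
    rw [Fintype.card_sigma, Fintype.sum_sigma]
    simp
  have hfα : ∀ x, (∑ j, p j * q j) * α x = ∑ c, α x * (U x.1 c * V x.1 c) := by
    intro x
    rw [Finset.sum_mul, Fintype.sum_sigma, Finset.sum_eq_single x]
    · apply Finset.sum_congr rfl
      intro c _
      show α x * U x.1 c * (V x.1 c * β x) * α x = _
      simp only [mul_assoc, hs, (hUV x.1).ve]
    · intro b _ hb
      apply Finset.sum_eq_zero
      intro c _
      show α b * U b.1 c * (V b.1 c * β b) * α x = _
      simp only [mul_assoc, hn b x hb, mul_zero]
    · simp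
  set g := ∑ j, p j * q j with hg
  have gg : g * g = g := hpq.sum_idem
  have fg : f * g = g := hpq.e_sum
  have gf : g * f = g := hpq.sum_e
  have hgr : N g = (∑ t, r t * a t : ℕ) * (1 / 2 ^ (n + k) : ℝ) := by
    rw [hg, hpq.rank hP hπ, hcard, hπr]
  have hfg : N (f - g) ≤ 5 * δ := by
    rw [pr_idem_sub hP ff gg fg gf, hgr]; exact haloss
  have hke : ((2 ^ k : ℕ) : ℝ) * N π = N e := by
    rw [hπr, hne, pow_add]; push_cast; field_simp
  have hge : N g ≤ N e := by
    rw [hgr, ← hke, hπr]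
    exact mul_le_mul_of_nonneg_right (by exact_mod_cast hale) (by positivity)
  have heg : N (e - g) ≤ 9 * δ := by
    have := pr_tri hP e f g
    linarith
  obtain ⟨s, s', hs's, es, sg, s'e, gs', hs1, hs2⟩ := move_idem hP hreg hc he gg heg hge
  have hgp : ∀ j, g * p j = p j := fun j => hpq.sum_mul_u j
  have hqg : ∀ j, q j * g = q j := fun j => hpq.v_mul_sum j
  have hfr : IsFrame π e (fun j => s * p j) (fun j => q j * s') := by
    refine ⟨?_, ?_, ?_, ?_, ?_, ?_⟩
    · intro j
      show q j * s' * (s * p j) = π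
      rw [mul_assoc, ra hs's, hgp, hpq.same]
    · intro i j hij
      show q i * s' * (s * p j) = 0
      rw [mul_assoc, ra hs's, hgp, hpq.ne i j hij]
    · intro j
      show s * p j * π = s * p j
      rw [mul_assoc, hpq.uπ]
    · intro j
      show π * (q j * s') = q j * s'
      rw [ra (hpq.πv j)]
    · intro j
      show e * (s * p j) = s * p j
      rw [ra es]
    · intro j
      show q j * s' * e = q j * s'
      rw [mul_assoc, s'e]
  obtain ⟨u, v, huv, huve, G, hG⟩ := frame_extend hN hc hfr hπ he (2 ^ k) hke
    (by rw [hcard]; exact hale)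
  refine ⟨k, π, u, v, hk1, huv, huve, fun i => ⟨s * y i.succ * s', ?_, ?_⟩⟩
  · have hyi := hy i.succ
    simp only [Fin.cons_succ] at hyi
    have h1 : x i - s * y i.succ * s' = (e - s) * (x i * e) + s * (x i - y i.succ) * e +
        s * y i.succ * (e - s') := by
      conv_lhs => rw [← hx i]
      simp only [mul_sub, sub_mul, mul_assoc]; abel
    have h2 := hP.subadditive ((e - s) * (x i * e) + s * (x i - y i.succ) * e)
      (s * y i.succ * (e - s'))
    have h3 := hP.subadditive ((e - s) * (x i * e)) (s * (x i - y i.succ) * e)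
    have h4 := hP.mul_le_left (e - s) (x i * e)
    have h5 := pr_mul3 hP s (x i - y i.succ) e
    have h6 := hP.mul_le_right (s * y i.succ) (e - s')
    rw [h1]
    have : ε = 65 * δ := by rw [hδd]; ring
    linarith
  · obtain ⟨κ, hκ⟩ := hspan (y i.succ) (hyD _)
    have sf : s * f = s := by rw [← sg, mul_assoc, gf]
    have fs' : f * s' = s' := by rw [← gs', ra fg]
    have h1 : s * y i.succ * s' = s * (f * y i.succ * f) * s' := by
      conv_lhs => rw [← sf, ← fs']
      simp only [mul_assoc]
    rw [h1, hκ]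
    simp only [Finset.mul_sum, Finset.sum_mul]
    refine Submodule.sum_mem _ fun t _ => Submodule.sum_mem _ fun i1 _ =>
      Submodule.sum_mem _ fun j1 _ => ?_
    rw [mul_smul_comm, smul_mul_assoc]
    refine Submodule.smul_mem _ _ ?_
    have h2 : s * (α ⟨t, i1⟩ * β ⟨t, j1⟩) * s' =
        ∑ c, s * p ⟨⟨t, i1⟩, c⟩ * (q ⟨⟨t, j1⟩, c⟩ * s') := by
      conv_lhs => rw [← sg]
      have : s * g * (α ⟨t, i1⟩ * β ⟨t, j1⟩) * s' = s * (g * α ⟨t, i1⟩) * (β ⟨t, j1⟩ * s') := by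
        simp only [mul_assoc]
      rw [this, hfα, Finset.mul_sum, Finset.sum_mul]
      apply Finset.sum_congr rfl
      intro c _
      simp only [p, q, mul_assoc]
    rw [h2]
    refine Submodule.sum_mem _ fun c _ => Submodule.subset_span
      ⟨(G ⟨⟨t, i1⟩, c⟩, G ⟨⟨t, j1⟩, c⟩), ?_⟩
    show u _ * v _ = _
    rw [(hG _).1, (hG _).2]

end Corner

section Tower

variable {K : Type*} [Field K] {Q : Type*} [Ring Q] [Algebra K Q] {N : Q → ℝ}

/-- Splitting of binary indices. -/
def bE {m n : ℕ} (h : m ≤ n) : Fin (2 ^ m) × Fin (2 ^ (n - m)) ≃ Fin (2 ^ n) :=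
  finProdFinEquiv.trans (finCongr (by rw [← pow_add, Nat.add_sub_cancel' h]))

theorem bE_symm_fst {m n : ℕ} (h : m ≤ n) (i : Fin (2 ^ n)) :
    (((bE h).symm i).1 : ℕ) = i / 2 ^ (n - m) := by
  simp [bE]

theorem bE_symm_snd {m n : ℕ} (h : m ≤ n) (i : Fin (2 ^ n)) :
    (((bE h).symm i).2 : ℕ) = i % 2 ^ (n - m) := by
  simp [bE]

/-- Block-diagonal embedding between binary matrix algebras. -/
def blk (K : Type*) [Field K] {m n : ℕ} (h : m ≤ n) :
    Matrix (Fin (2 ^ m)) (Fin (2 ^ m)) K →ₐ[K] Matrix (Fin (2 ^ n)) (Fin (2 ^ n)) K :=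
  (Matrix.reindexAlgEquiv K K (bE h)).toAlgHom.comp
    (AlgHom.ofLinearMap
      { toFun := fun z => z ⊗ₖ (1 : Matrix (Fin (2 ^ (n - m))) (Fin (2 ^ (n - m))) K)
        map_add' := fun x y => Matrix.add_kronecker x y _
        map_smul' := fun c x => Matrix.smul_kronecker c x _ }
      (Matrix.one_kronecker_one)
      (fun x y => by
        have := Matrix.mul_kronecker_mul x y
          (1 : Matrix (Fin (2 ^ (n - m))) (Fin (2 ^ (n - m))) K)
          (1 : Matrix (Fin (2 ^ (n - m))) (Fin (2 ^ (n - m))) K)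
        rw [mul_one] at this
        exact this))

theorem blk_apply {m n : ℕ} (h : m ≤ n) (z : Matrix (Fin (2 ^ m)) (Fin (2 ^ m)) K)
    (i j : Fin (2 ^ n)) :
    blk K h z i j = if ((bE h).symm i).2 = ((bE h).symm j).2 then
      z ((bE h).symm i).1 ((bE h).symm j).1 else 0 := by
  have : blk K h z i j = z ((bE h).symm i).1 ((bE h).symm j).1 *
    (1 : Matrix (Fin (2 ^ (n - m))) (Fin (2 ^ (n - m))) K) ((bE h).symm i).2 ((bE h).symm j).2 :=
    rfl
  rw [this, Matrix.one_apply]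
  split_ifs <;> simp

theorem blk_comp {m n p : ℕ} (h : m ≤ n) (h' : n ≤ p) :
    (blk K h').comp (blk K h) = blk K (h.trans h') := by
  apply AlgHom.ext
  intro z
  ext i j
  rw [AlgHom.comp_apply, blk_apply, blk_apply, blk_apply]
  have e1 : ∀ i, ((bE h).symm ((bE h').symm i).1).1 = ((bE (h.trans h')).symm i).1 := by
    intro i
    apply Fin.ext
    rw [bE_symm_fst, bE_symm_fst, bE_symm_fst, Nat.div_div_eq_div_mul, ← pow_add]
    congr 2
    omega
  have e2 : ((bE (h.trans h')).symm i).2 = ((bE (h.trans h')).symm j).2 ↔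
      ((bE h').symm i).2 = ((bE h').symm j).2 ∧
      ((bE h).symm ((bE h').symm i).1).2 = ((bE h).symm ((bE h').symm j).1).2 := by
    simp only [Fin.ext_iff, bE_symm_snd, bE_symm_fst]
    have : 2 ^ (p - m) = 2 ^ (p - n) * 2 ^ (n - m) := by
      rw [← pow_add]; congr 1; omega
    rw [this, Nat.mod_mul, Nat.mod_mul]
    constructor
    · intro hh
      have h1 : (i : ℕ) % 2 ^ (p - n) = (j : ℕ) % 2 ^ (p - n) := by
        have := congrArg (· % 2 ^ (p - n)) hh
        simpa using this
      refine ⟨h1, ?_⟩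
      rw [h1] at hh
      exact Nat.eq_of_mul_eq_mul_left (by positivity) (Nat.add_left_cancel hh)
    · rintro ⟨h1, h2⟩; rw [h1, h2]
  rw [e1, e1]
  by_cases h1 : ((bE h').symm i).2 = ((bE h').symm j).2
  · by_cases h2 : ((bE h).symm ((bE h').symm i).1).2 = ((bE h).symm ((bE h').symm j).1).2
    · rw [if_pos h1, if_pos h2, if_pos (e2.2 ⟨h1, h2⟩)]
    · rw [if_pos h1, if_neg h2, if_neg fun h => h2 (e2.1 h).2]
  · rw [if_neg h1, if_neg fun h => h1 (e2.1 h).1]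

theorem sum_single_one (n : ℕ) : (∑ i : Fin n, Matrix.single i i (1 : K)) = 1 := by
  classical
  ext a b
  rw [Matrix.sum_apply]
  simp only [Matrix.single_apply, Matrix.one_apply]
  by_cases h : a = b
  · subst h; simp
  · rw [if_neg h]; apply Finset.sum_eq_zero; intro i _; rw [if_neg]; rintro ⟨rfl, rfl⟩
    exact h rfl

theorem frameHom_single {ι : Type*} [Fintype ι] [DecidableEq ι] {π : Q} {u v : ι → Q}
    (h : IsFrame π 1 u v) (hs : ∑ i, u i * v i = 1) (i j : ι) :
    frameHom K h hs (Matrix.single i j 1) = u i * v j := by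
  rw [frameHom_apply, Finset.sum_eq_single i]
  · rw [Finset.sum_eq_single j]
    · simp
    · intro b _ hb
      rw [Matrix.single_apply_of_col_ne _ _ hb.symm, zero_smul]
    · simp
  · intro b _ hb
    apply Finset.sum_eq_zero
    intro c _
    rw [Matrix.single_apply_of_row_ne hb.symm, zero_smul]
  · simp

theorem step (hN : IsRankFunction N) (hreg : VNRegular Q) (hc : Cmp N) (hon : Onto N)
    (h3 : ∀ ε : ℝ, 0 < ε → ∀ (n : ℕ) (x : Fin n → Q),
          ∃ A : Subalgebra K Q, IsMatricialAlgebra K A ∧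
            ∃ y : Fin n → Q, (∀ i, y i ∈ A) ∧ ∀ i, N (x i - y i) < ε)
    {n : ℕ} (φ : Matrix (Fin (2 ^ n)) (Fin (2 ^ n)) K →ₐ[K] Q) {m : ℕ} (x : Fin m → Q)
    {ε : ℝ} (hε : 0 < ε) :
    ∃ (n' : ℕ) (h : n ≤ n') (φ' : Matrix (Fin (2 ^ n')) (Fin (2 ^ n')) K →ₐ[K] Q),
      n < n' ∧ φ = φ'.comp (blk K h) ∧ ∀ i, ∃ z, N (x i - φ' z) < ε := by
  classical
  have hP := hN.1
  let o : Fin (2 ^ n) := ⟨0, by positivity⟩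
  set e : Q := φ (Matrix.single o o 1) with he_def
  let U : Fin (2 ^ n) → Q := fun a => φ (Matrix.single a o 1)
  let V : Fin (2 ^ n) → Q := fun a => φ (Matrix.single o a 1)
  have hfr : IsFrame e 1 U V := by
    refine ⟨?_, ?_, ?_, ?_, ?_, ?_⟩
    · intro i; simp only [U, V, he_def, ← map_mul]; simp
    · intro i j hij
      simp only [U, V, ← map_mul]
      rw [Matrix.single_mul_single_of_ne _ _ _ _ hij, map_zero]
    · intro i; simp only [U, he_def, ← map_mul]; simp
    · intro i; simp only [V, he_def, ← map_mul]; simp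
    · intro i; rw [one_mul]
    · intro i; rw [mul_one]
  have hUV : ∀ a b, U a * V b = φ (Matrix.single a b 1) := by
    intro a b; simp only [U, V, ← map_mul]; simp
  have hone : ∑ i, U i * V i = 1 := by
    simp only [hUV]
    rw [← map_sum, sum_single_one, map_one]
  have he : e * e = e := by simp only [he_def, ← map_mul]; simp
  have hne : N e = 1 / 2 ^ n := by
    rw [he_def, rank_unit hP φ o]; push_cast; rfl
  let E := Fintype.equivFin (Fin m × Fin (2 ^ n) × Fin (2 ^ n))
  let X : Fin (Fintype.card (Fin m × Fin (2 ^ n) × Fin (2 ^ n))) → Q := fun j =>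
    V (E.symm j).2.1 * x (E.symm j).1 * U (E.symm j).2.2
  have hX : ∀ j, e * X j * e = X j := by
    intro j
    simp only [X]
    rw [mul_assoc, mul_assoc _ _ e, hfr.uπ, ← mul_assoc, ← mul_assoc, hfr.πv]
  set ε' : ℝ := ε / ((2 ^ n) * (2 ^ n) + 1) with hε'
  have hε'0 : 0 < ε' := by positivity
  obtain ⟨k, π, w, z, hk1, hwz, hwze, happ⟩ := corner_approx (K := K) hN hreg hc hon h3 he hne X hX
    hε'0
  obtain ⟨n', hn', rfl⟩ : ∃ n', n < n' ∧ k = n' - n := ⟨n + k, by omega, by omega⟩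
  have h : n ≤ n' := hn'.le
  let u' : Fin (2 ^ n') → Q := fun i => U ((bE h).symm i).1 * w ((bE h).symm i).2
  let v' : Fin (2 ^ n') → Q := fun i => z ((bE h).symm i).2 * V ((bE h).symm i).1
  have hfr' : IsFrame π 1 u' v' := by
    refine ⟨?_, ?_, ?_, ?_, ?_, ?_⟩
    · intro i
      simp only [u', v']
      rw [mul_assoc, ra (hfr.same _), hwz.eu, hwz.same]
    · intro i j hij
      simp only [u', v']
      by_cases h1 : ((bE h).symm i).1 = ((bE h).symm j).1
      · rw [mul_assoc, h1, ra (hfr.same _), hwz.eu, hwz.ne]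
        intro h2
        exact hij ((bE h).symm.injective (Prod.ext h1 h2))
      · rw [mul_assoc, ra (hfr.ne _ _ h1), zero_mul, mul_zero]
    · intro i; simp only [u']; rw [mul_assoc, hwz.uπ]
    · intro i; simp only [v']; rw [ra (hwz.πv _)]
    · intro i; rw [one_mul]
    · intro i; rw [mul_one]
  have key : ∀ a b, ∑ c, U a * w c * (z c * V b) = U a * V b := by
    intro a b
    calc ∑ c, U a * w c * (z c * V b) = U a * (∑ c, w c * z c) * V b := by
          rw [Finset.mul_sum, Finset.sum_mul]; simp only [mul_assoc]
      _ = U a * V b := by rw [hwze, hfr.uπ]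
  have hone' : ∑ i, u' i * v' i = 1 := by
    rw [← Equiv.sum_comp (bE h), Fintype.sum_prod_type]
    simp only [u', v', Equiv.symm_apply_apply]
    simp only [key, hone]
  refine ⟨n', h, frameHom K hfr' hone', hn', ?_, ?_⟩
  · apply AlgHom.ext
    intro M
    rw [AlgHom.comp_apply, frameHom_apply, ← Equiv.sum_comp (bE h), Fintype.sum_prod_type]
    have h1 : ∀ a c, ∑ j, blk K h M (bE h (a, c)) j • (u' (bE h (a, c)) * v' j) =
        ∑ b, M a b • (U a * w c * (z c * V b)) := by
      intro a c
      rw [← Equiv.sum_comp (bE h), Fintype.sum_prod_type]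
      apply Finset.sum_congr rfl
      intro b _
      rw [Finset.sum_eq_single c]
      · rw [blk_apply]; simp only [u', v', Equiv.symm_apply_apply, if_true]
      · intro d _ hd
        rw [blk_apply]
        simp only [Equiv.symm_apply_apply]
        rw [if_neg hd.symm, zero_smul]
      · simp
    simp only [h1]
    conv_lhs => rw [Matrix.matrix_eq_sum_single M, map_sum]
    apply Finset.sum_congr rfl
    intro a _
    rw [map_sum, Finset.sum_comm]
    apply Finset.sum_congr rfl
    intro b _
    rw [← Finset.smul_sum, key, hUV, ← map_smul, Matrix.smul_single, smul_eq_mul, mul_one]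
  · intro i
    have happ' : ∀ a b, ∃ y, N (V a * x i * U b - y) < ε' ∧ y ∈ Submodule.span K
        (Set.range fun c : Fin (2 ^ (n' - n)) × Fin (2 ^ (n' - n)) => w c.1 * z c.2) := by
      intro a b
      have := happ (E (i, a, b))
      simpa only [X, Equiv.symm_apply_apply] using this
    choose y hy hyspan using happ'
    have hmem : ∀ a b, U a * y a b * V b ∈ (frameHom K hfr' hone').range := by
      intro a b
      refine Submodule.span_induction (p := fun q _ => U a * q * V b ∈
        (frameHom K hfr' hone').range) ?_ ?_ ?_ ?_ (hyspan a b)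
      · rintro _ ⟨⟨c, d⟩, rfl⟩
        refine ⟨Matrix.single (bE h (a, c)) (bE h (b, d)) 1, ?_⟩
        refine (frameHom_single hfr' hone' _ _).trans ?_
        simp only [u', v', Equiv.symm_apply_apply, mul_assoc]
      · simp only [mul_zero, zero_mul]; exact Subalgebra.zero_mem _
      · intro p q _ _ hp hq
        simp only [mul_add, add_mul]; exact Subalgebra.add_mem _ hp hq
      · intro c p _ hp
        simp only [mul_smul_comm, smul_mul_assoc]; exact Subalgebra.smul_mem _ hp c
    obtain ⟨Z, hZ⟩ : (∑ a, ∑ b, U a * y a b * V b) ∈ (frameHom K hfr' hone').range :=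
      Subalgebra.sum_mem _ fun a _ => Subalgebra.sum_mem _ fun b _ => hmem a b
    refine ⟨Z, ?_⟩
    have hZ' : frameHom K hfr' hone' Z = ∑ a, ∑ b, U a * y a b * V b := hZ
    rw [hZ']
    have hxi : x i = ∑ a, ∑ b, U a * (V a * x i * U b) * V b := by
      calc x i = (∑ a, U a * V a) * x i * (∑ b, U b * V b) := by rw [hone, one_mul, mul_one]
        _ = _ := by
          rw [Finset.sum_mul, Finset.sum_mul]
          apply Finset.sum_congr rfl
          intro a _
          rw [Finset.mul_sum]
          simp only [mul_assoc]
    have h2 : x i - ∑ a, ∑ b, U a * y a b * V b =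
        ∑ a, ∑ b, U a * (V a * x i * U b - y a b) * V b := by
      conv_lhs => rw [hxi]
      simp only [mul_sub, sub_mul, Finset.sum_sub_distrib]
    rw [h2]
    calc N (∑ a, ∑ b, U a * (V a * x i * U b - y a b) * V b)
        ≤ ∑ a, ∑ b, N (U a * (V a * x i * U b - y a b) * V b) :=
          (pr_sum_le hP _ _).trans (Finset.sum_le_sum fun a _ => pr_sum_le hP _ _)
      _ ≤ ∑ a : Fin (2 ^ n), ∑ b : Fin (2 ^ n), ε' := by
          refine Finset.sum_le_sum fun a _ => Finset.sum_le_sum fun b _ => ?_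
          exact (pr_mul3 hP _ _ _).trans (hy a b).le
      _ = (2 ^ n * 2 ^ n) * ε' := by simp; ring
      _ < ε := by
          have : ε = (2 ^ n * 2 ^ n + 1) * ε' := by rw [hε']; field_simp
          rw [this]
          linarith

theorem pr_smul (hP : IsPseudoRankFunction N) (c : K) (x : Q) : N (c • x) ≤ N x := by
  have := hP.mul_le_right (algebraMap K Q c) x
  rwa [← Algebra.smul_def] at this

/-- The main construction: a dense dyadic tower. -/
theorem tower [Nontrivial Q] (hN : IsRankFunction N) (hreg : VNRegular Q) (hc : Cmp N)
    (hon : Onto N) (hcomp : RankComplete N)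
    (h3 : ∀ ε : ℝ, 0 < ε → ∀ (n : ℕ) (x : Fin n → Q),
          ∃ A : Subalgebra K Q, IsMatricialAlgebra K A ∧
            ∃ y : Fin n → Q, (∀ i, y i ∈ A) ∧ ∀ i, N (x i - y i) < ε)
    (y : ℕ → Q) (hy : RankDense N (Submodule.span K (Set.range y) : Set Q)) :
    IsMK K Q N := by
  classical
  have hP := hN.1
  have hfr0 : IsFrame (1 : Q) 1 (fun _ : Fin (2 ^ 0) => (1 : Q)) (fun _ => 1) := by
    refine ⟨?_, ?_, ?_, ?_, ?_, ?_⟩ <;> intros <;> simp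
    · rename_i i j hij
      exact hij (Fin.ext (by have := i.2; have := j.2; simp only [pow_zero] at *; omega))
  let φ0 : Matrix (Fin (2 ^ 0)) (Fin (2 ^ 0)) K →ₐ[K] Q := frameHom K hfr0 (by simp)
  obtain ⟨s, -, hs⟩ := exists_seq_rel
    (α := Σ n : ℕ, (Matrix (Fin (2 ^ n)) (Fin (2 ^ n)) K →ₐ[K] Q))
    (fun j s => j ≤ s.1)
    (fun j s s' => (∃ h : s.1 ≤ s'.1, s.2 = s'.2.comp (blk K h)) ∧
      ∀ i : Fin (j + 1), ∃ z, N (y i - s'.2 z) < 1 / ((j : ℝ) + 1))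
    ⟨0, φ0⟩ le_rfl
    (by
      rintro j ⟨n, φ⟩ hj
      obtain ⟨n', h, φ', h1, h2, h4⟩ := step hN hreg hc hon h3 φ (fun i : Fin (j + 1) => y i)
        (ε := 1 / ((j : ℝ) + 1)) (by positivity)
      exact ⟨⟨n', φ'⟩, lt_of_le_of_lt hj h1, ⟨h, h2⟩, h4⟩)
  have hle : ∀ j, j ≤ (s j).1 := fun j => (hs j).1
  let A : ℕ → Subalgebra K Q := fun m => ((s m).2.comp (blk K (hle m))).range
  have hA : ∀ m, A m ≤ A (m + 1) := by
    intro m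
    obtain ⟨h, he⟩ := (hs m).2.1
    rintro _ ⟨z, rfl⟩
    refine ⟨blk K (Nat.le_succ m) z, ?_⟩
    show (s (m + 1)).2 (blk K (hle (m + 1)) (blk K (Nat.le_succ m) z)) =
      (s m).2 (blk K (hle m) z)
    rw [he]
    show (s (m + 1)).2 (((blk K (hle (m + 1))).comp (blk K (Nat.le_succ m))) z) =
      (s (m + 1)).2 (((blk K h).comp (blk K (hle m))) z)
    rw [blk_comp, blk_comp]
  have hAmono : Monotone A := monotone_nat_of_le_succ hA
  have hfin : ∀ p m (h : (s p).1 ≤ m), ∀ z, (s p).2 z ∈ A m := by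
    intro p m h z
    have hpm : p ≤ m := (hle p).trans h
    have hcomp : ∀ d, ∃ h : (s p).1 ≤ (s (p + d)).1, (s p).2 = (s (p + d)).2.comp (blk K h) := by
      intro d
      induction d with
      | zero =>
        refine ⟨le_rfl, ?_⟩
        apply AlgHom.ext
        intro z
        rw [AlgHom.comp_apply]
        congr 1
        ext i j
        rw [blk_apply]
        have e1 : ∀ i, ((bE (le_refl (s p).1)).symm i).1 = i := by
          intro i; apply Fin.ext; rw [bE_symm_fst]; simp
        have e2 : ∀ i, (((bE (le_refl (s p).1)).symm i).2 : ℕ) = 0 := by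
          intro i; rw [bE_symm_snd]; simp [Nat.mod_one]
        rw [e1, e1, if_pos (Fin.ext (by rw [e2, e2]))]
      | succ d ih =>
        obtain ⟨h1, e1⟩ := ih
        obtain ⟨h2, e2⟩ := (hs (p + d)).2.1
        refine ⟨h1.trans h2, ?_⟩
        rw [← blk_comp h1 h2]
        conv_lhs => rw [e1, e2]
        rfl
    obtain ⟨d, rfl⟩ := Nat.exists_eq_add_of_le hpm
    obtain ⟨h1, e1⟩ := hcomp d
    refine ⟨blk K h z, ?_⟩
    show (s (p + d)).2 (((blk K (hle (p + d))).comp (blk K h)) z) = (s p).2 z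
    rw [blk_comp, e1]
    rfl
  refine ⟨hN, hcomp, A, hA, ?_, ?_⟩
  · intro n
    refine ⟨(AlgEquiv.ofInjective ((s n).2.comp (blk K (hle n))) ?_).symm⟩
    haveI : Nonempty (Fin (2 ^ n)) := ⟨⟨0, by positivity⟩⟩
    exact RingHom.injective ((s n).2.comp (blk K (hle n))).toRingHom
  · let C : Submodule K Q :=
      { carrier := {q | ∀ ε : ℝ, 0 < ε → ∃ n, ∃ z ∈ A n, N (q - z) < ε}
        zero_mem' := by
          intro ε hε
          exact ⟨0, 0, (A 0).zero_mem, by rw [sub_zero, pr_zero hP]; exact hε⟩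
        add_mem' := by
          intro a b ha hb ε hε
          obtain ⟨n, z, hz, h1⟩ := ha (ε / 2) (by linarith)
          obtain ⟨n', z', hz', h2⟩ := hb (ε / 2) (by linarith)
          refine ⟨max n n', z + z', (A _).add_mem (hAmono (le_max_left _ _) hz)
            (hAmono (le_max_right _ _) hz'), ?_⟩
          rw [add_sub_add_comm]
          have := hP.subadditive (a - z) (b - z')
          linarith
        smul_mem' := by
          intro c a ha ε hε
          obtain ⟨n, z, hz, h1⟩ := ha ε hε
          refine ⟨n, c • z, (A n).smul_mem hz c, ?_⟩
          rw [← smul_sub]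
          exact (pr_smul hP _ _).trans_lt h1 }
    have hyC : ∀ i, y i ∈ C := by
      intro i ε hε
      obtain ⟨j, hj⟩ := exists_nat_gt (1 / ε)
      obtain ⟨z, hz⟩ := (hs (max i j)).2.2 ⟨i, by omega⟩
      refine ⟨_, _, hfin (max i j + 1) _ le_rfl z, hz.trans ?_⟩
      rw [div_lt_comm₀ (by positivity) hε]
      have : (j : ℝ) ≤ ((max i j : ℕ) : ℝ) := by exact_mod_cast le_max_right _ _
      linarith
    have hspan : Submodule.span K (Set.range y) ≤ C := by
      rw [Submodule.span_le]; rintro _ ⟨i, rfl⟩; exact hyC i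
    intro q ε hε
    obtain ⟨q0, hq0, h1⟩ := hy q (ε / 2) (by linarith)
    obtain ⟨n, z, hz, h2⟩ := hspan hq0 (ε / 2) (by linarith)
    refine ⟨z, Set.mem_iUnion.2 ⟨n, hz⟩, ?_⟩
    have := pr_tri hP q q0 z
    linarith

end Tower

section Final

variable {K : Type*} [Field K] {Q : Type*} [Ring Q] [Algebra K Q] {N : Q → ℝ}

theorem countable_span (Q₀ : Subalgebra K Q) (hdim : Module.rank K Q₀ ≤ Cardinal.aleph0) :
    ∃ y : ℕ → Q, (Q₀ : Set Q) ⊆ Submodule.span K (Set.range y) := by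
  classical
  let b := Module.Free.chooseBasis K Q₀
  have hcount : Countable (Module.Free.ChooseBasisIndex K Q₀) := by
    rw [← Cardinal.mk_le_aleph0_iff, b.mk_eq_rank'']
    exact hdim
  let S : Set Q := insert 0 (Set.range fun i => (b i : Q))
  have hS : S.Countable := (Set.countable_range _).insert _
  obtain ⟨y, hy⟩ := hS.exists_eq_range ⟨0, Set.mem_insert _ _⟩
  refine ⟨y, ?_⟩
  intro q hq
  rw [← hy]
  have h2 : (⟨q, hq⟩ : Q₀) ∈ Submodule.span K (Set.range b) := by
    rw [b.span_eq]; trivial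
  have h3 := Submodule.mem_map_of_mem (f := Q₀.val.toLinearMap) h2
  rw [Submodule.map_span] at h3
  refine Submodule.span_mono ?_ h3
  rintro _ ⟨_, ⟨i, rfl⟩, rfl⟩
  exact Set.mem_insert_of_mem _ ⟨i, rfl⟩

theorem mk_imp_ultra (K : Type) [Field K] (Q : Type) [Ring Q] [Algebra K Q] (NQ : Q → ℝ)
    (h : IsMK K Q NQ) : Nonempty (UltramatricialCompletionData K Q NQ) := by
  classical
  obtain ⟨hN, hcomp, A, hA, hiso, hdense⟩ := h
  have hP := hN.1
  have hmono : Monotone A := monotone_nat_of_le_succ hA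
  let B : Subalgebra K Q := ⨆ n, A n
  have hB : ∀ b : B, ∃ n, (b : Q) ∈ A n := by
    intro b
    have h1 : ((⨆ n, A n : Subalgebra K Q) : Set Q) = ⋃ n, (A n : Set Q) :=
      Subalgebra.coe_iSup_of_directed hmono.directed_le
    have h2 : (b : Q) ∈ ((⨆ n, A n : Subalgebra K Q) : Set Q) := b.2
    rw [h1] at h2
    exact Set.mem_iUnion.1 h2
  have hAB : ∀ n, A n ≤ B := fun n => le_iSup A n
  have hNB : IsPseudoRankFunction (fun b : B => NQ b) :=
    ⟨fun x => hP.nonneg _, fun x => hP.le_one _, hP.map_one, fun a b => hP.subadditive _ _,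
      fun a b => hP.mul_le_left _ _, fun a b => hP.mul_le_right _ _,
      fun e f he hf h1 h2 => hP.add_of_orthogonal _ _ (congrArg Subtype.val he)
        (congrArg Subtype.val hf) (congrArg Subtype.val h1) (congrArg Subtype.val h2)⟩
  have huniq : ∀ N' : B → ℝ, IsPseudoRankFunction N' → N' = fun b : B => NQ b := by
    intro N' hN'
    funext b
    obtain ⟨n, hn⟩ := hB b
    obtain ⟨θ⟩ := hiso n
    let φ : Matrix (Fin (2 ^ n)) (Fin (2 ^ n)) K →ₐ[K] B :=
      (Subalgebra.inclusion (hAB n)).comp θ.symm.toAlgHom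
    have hb : b = φ (θ ⟨b, hn⟩) := by
      apply Subtype.ext
      simp [φ]
    rw [hb]
    exact rank_matrix_unique hN' hNB φ _
  have hmat : ∀ n, IsMatricialAlgebra K ((A n).comap B.val) := by
    intro n
    obtain ⟨θ⟩ := hiso n
    refine ⟨0, fun _ => 2 ^ n, fun _ => by positivity, ⟨?_⟩⟩
    let τ : ((A n).comap B.val) ≃ₐ[K] A n :=
      AlgEquiv.ofBijective ((B.val.comp ((A n).comap B.val).val).codRestrict (A n)
        (fun x => x.2))
        ⟨fun x y hxy => Subtype.ext (Subtype.ext (congrArg (fun a : A n => (a : Q)) hxy)),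
          fun x => ⟨⟨⟨x, hAB n x.2⟩, x.2⟩, rfl⟩⟩
    exact (τ.trans θ).trans (AlgEquiv.funUnique K (Fin 1) _).symm
  refine ⟨{ B := B, NB := fun b => NQ b, pseudoRank := hNB, extremal := ?_,
            ultramatricial := ⟨fun n => (A n).comap B.val, fun n x hx => hA n hx, hmat, hB⟩,
            φ := B.val, rank_eq := fun _ => rfl, dense := ?_, complete := hcomp }⟩
  · refine ⟨hNB, ?_⟩
    intro x hx y hy _
    exact huniq x hx
  · intro x ε hε
    obtain ⟨y, hy, h1⟩ := hdense x ε hε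
    obtain ⟨n, hn⟩ := Set.mem_iUnion.1 hy
    exact ⟨y, ⟨⟨y, hAB n hn⟩, rfl⟩, h1⟩

theorem ultra_imp_local (K : Type) [Field K] (Q : Type) [Ring Q] [Algebra K Q] [Nontrivial Q]
    (NQ : Q → ℝ) (D : UltramatricialCompletionData K Q NQ) :
    ∀ ε : ℝ, 0 < ε → ∀ (n : ℕ) (x : Fin n → Q),
      ∃ A : Subalgebra K Q, IsMatricialAlgebra K A ∧
        ∃ y : Fin n → Q, (∀ i, y i ∈ A) ∧ ∀ i, NQ (x i - y i) < ε := by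
  intro ε hε n x
  letI := D.ringB
  letI := D.algB
  obtain ⟨C, hC, hmat, hex⟩ := D.ultramatricial
  have hmono : Monotone C := monotone_nat_of_le_succ hC
  have h1 : ∀ i, ∃ b : D.B, NQ (x i - D.φ b) < ε := by
    intro i
    obtain ⟨_, ⟨b, rfl⟩, h⟩ := D.dense (x i) ε hε
    exact ⟨b, h⟩
  choose b hb using h1
  choose k hk using fun i => hex (b i)
  let m := ∑ i, k i
  have hm : ∀ i, b i ∈ C m := fun i => hmono
    (Finset.single_le_sum (f := k) (fun _ _ => Nat.zero_le _) (Finset.mem_univ i)) (hk i)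
  exact ⟨(D.φ.comp (C m).val).range, matricial_range (hmat m) _, fun i => D.φ (b i),
    fun i => ⟨⟨b i, hm i⟩, rfl⟩, hb⟩

end Final

/-- **Theorem 2.2** (Ara–Claramunt). Let `Q` be a continuous factor which is a `K`-algebra, with
unique rank function `N_Q`, possessing a dense subalgebra of countable `K`-dimension. The
following are equivalent: (i) `Q ≅ M_K`; (ii) `Q` is the completion of an ultramatricial
`K`-algebra with respect to an extremal pseudo-rank function; (iii) `Q` is locally approximated
by matricial `K`-subalgebras. -/
theorem statement0 (K : Type) [Field K] (Q : Type) [Ring Q] [Algebra K Q]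
    (NQ : Q → ℝ) (hQ : IsContinuousFactor Q) (hNQ : IsRankFunction NQ)
    (Q₀ : Subalgebra K Q) (hdim : Module.rank K Q₀ ≤ Cardinal.aleph0)
    (hdense : RankDense NQ (Q₀ : Set Q)) :
    List.TFAE
      [ IsMK K Q NQ,
        Nonempty (UltramatricialCompletionData K Q NQ),
        ∀ ε : ℝ, 0 < ε → ∀ (n : ℕ) (x : Fin n → Q),
          ∃ A : Subalgebra K Q, IsMatricialAlgebra K A ∧
            ∃ y : Fin n → Q, (∀ i, y i ∈ A) ∧ ∀ i, NQ (x i - y i) < ε ] := by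
  obtain ⟨hsimple, hreg, hinj, hinj', N₀, hN₀, hrange⟩ := hQ
  have hB : Module.Baer Q Q := Module.Baer.of_injective hinj
  have hB' : Module.Baer Qᵐᵒᵖ Qᵐᵒᵖ := Module.Baer.of_injective hinj'
  have hc₀ : Cmp N₀ := compar hN₀ hreg hB
  have hon₀ : Onto N₀ := onto_of_range hN₀.1 hreg hrange
  obtain rfl : NQ = N₀ := rank_unique hNQ hN₀ hreg hc₀ hon₀
  have hcomp : RankComplete NQ := complete_of_inj hNQ hreg hB hB' hc₀ hon₀
  have hnt : Nontrivial Q := inferInstance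
  tfae_have 1 → 2 := mk_imp_ultra K Q NQ
  tfae_have 2 → 3 := fun ⟨D⟩ => ultra_imp_local K Q NQ D
  tfae_have 3 → 1 := by
    intro h3
    obtain ⟨y, hy⟩ := countable_span Q₀ hdim
    refine tower hNQ hreg hc₀ hon₀ hcomp h3 y ?_
    intro x ε hε
    obtain ⟨z, hz, h⟩ := hdense x ε hε
    exact ⟨z, hy hz, h⟩
  tfae_finish

end AraClaramunt
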